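/- arXiv:2605.28374 — 10 statements merged into one kernel-verified Lean document; each statement's English description precedes it below -/
import Mathlib

section
/- For every real n×n hierarchy matrix A with columns a_1,…,a_n such that the denominator Σ_{i=1}^n w_i · (a_iᵀ C^(i) a_i) is strictly positive, the weighted variance satisfies the global-score bound: (Σ_{i=1}^n w_i · Var_i) · (Σ_{i=1}^n w_i · a_iᵀ C^(i) a_i) ≥ (Σ_{i=1}^n w_i · a_iᵀ b^(i))². -/
open Finset

/-!
For a coefficient vector `a`, put `s = ∑ j, a j * g j`, and let `f = h - E` be the centred
estimator. Then `aᵀ b = ∑ x, s x * f x` and `aᵀ C a = ∑ x, s x ^ 2 / p x`, so for each single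
distribution the bound `(aᵀ b)² ≤ Var * aᵀ C a` is the Cauchy–Schwarz inequality for the splitting
`s * f = (√p * f) * (s / √p)`. A second application of Cauchy–Schwarz, to the sum over the
distributions with weights `w`, gives the global bound.
-/

section CauchySchwarz

variable {ι R : Type*} [LinearOrder R]

theorem sq_sum_mul_le_sum_mul_sq_mul_sum_sq_div [Semifield R] [IsStrictOrderedRing R]
    [ExistsAddOfLE R] (t : Finset ι) {p : ι → R} (hp : ∀ i ∈ t, 0 < p i) (s f : ι → R) :
    (∑ i ∈ t, s i * f i) ^ 2 ≤ (∑ i ∈ t, p i * f i ^ 2) * ∑ i ∈ t, s i ^ 2 / p i := by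
  refine sum_sq_le_sum_mul_sum_of_sq_le_mul t
    (fun i hi => mul_nonneg (hp i hi).le (sq_nonneg _))
    (fun i hi => div_nonneg (sq_nonneg _) (hp i hi).le) fun i hi => le_of_eq ?_
  have hpi : p i ≠ 0 := (hp i hi).ne'
  field_simp

theorem sq_sum_mul_le_sum_mul_mul_sum_mul_of_sq_le_mul [CommSemiring R] [IsStrictOrderedRing R]
    [ExistsAddOfLE R] (t : Finset ι) {w r u v : ι → R} (hw : ∀ i ∈ t, 0 ≤ w i)
    (hu : ∀ i ∈ t, 0 ≤ u i) (hv : ∀ i ∈ t, 0 ≤ v i) (hr : ∀ i ∈ t, r i ^ 2 ≤ u i * v i) :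
    (∑ i ∈ t, w i * r i) ^ 2 ≤ (∑ i ∈ t, w i * u i) * ∑ i ∈ t, w i * v i := by
  refine sum_sq_le_sum_mul_sum_of_sq_le_mul t (fun i hi => mul_nonneg (hw i hi) (hu i hi))
    (fun i hi => mul_nonneg (hw i hi) (hv i hi)) fun i hi => ?_
  calc (w i * r i) ^ 2 = w i ^ 2 * r i ^ 2 := mul_pow ..
    _ ≤ w i ^ 2 * (u i * v i) := mul_le_mul_of_nonneg_left (hr i hi) (sq_nonneg _)
    _ = w i * u i * (w i * v i) := by ring

end CauchySchwarz

section BiasVector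

variable {κ X R : Type*} [Fintype X]

/-- The bias vector `b`, the pairing of the test functions `g` with an estimation error `f`. The
error of an estimator `h` with expectation `E` is `f = h - E`. -/
def biasVector [NonUnitalNonAssocSemiring R] (g : κ → X → R) (f : X → R) : κ → R :=
  fun j => ∑ x, g j x * f x

theorem sum_mul_biasVector [NonUnitalSemiring R] [Fintype κ] (a : κ → R) (g : κ → X → R)
    (f : X → R) :
    ∑ j, a j * biasVector g f j = ∑ x, (∑ j, a j * g j x) * f x :=
  Matrix.dotProduct_mulVec a (Matrix.of g) f

end BiasVector

section InformationMatrix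

variable {ι κ X K : Type*} [Fintype X] [Field K]

/-- The information matrix `C` of the test functions `g` relative to the density `p`. It is
meant for `p` without zeros: where `p x = 0`, the summand is `0` by the convention on division. -/
def informationMatrix (p : X → K) (g : κ → X → K) : Matrix κ κ K :=
  Matrix.of fun j k => ∑ x, g j x * g k x / p x

theorem sum_sum_mul_informationMatrix_mul [Fintype κ] (p : X → K) (g : κ → X → K) (a : κ → K) :
    ∑ j, ∑ k, a j * informationMatrix p g j k * a k = ∑ x, (∑ j, a j * g j x) ^ 2 / p x := by
  calc ∑ j, ∑ k, a j * informationMatrix p g j k * a k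
    _ = ∑ j, ∑ k, ∑ x, a j * g j x * (a k * g k x) / p x := by
      simp only [informationMatrix, Matrix.of_apply, mul_sum, sum_mul]
      refine sum_congr rfl fun j _ => sum_congr rfl fun k _ => sum_congr rfl fun x _ => ?_
      ring
    _ = ∑ x, ∑ j, ∑ k, a j * g j x * (a k * g k x) / p x := by
      simp only [sum_comm (t := (univ : Finset X))]
    _ = ∑ x, (∑ j, a j * g j x) ^ 2 / p x := by
      simp only [sq, sum_mul_sum, sum_div]

variable [LinearOrder K] [IsStrictOrderedRing K]

theorem sum_sum_mul_informationMatrix_mul_nonneg [Fintype κ] {p : X → K} (hp : ∀ x, 0 ≤ p x)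
    (g : κ → X → K) (a : κ → K) :
    0 ≤ ∑ j, ∑ k, a j * informationMatrix p g j k * a k := by
  rw [sum_sum_mul_informationMatrix_mul]
  exact sum_nonneg fun x _ => div_nonneg (sq_nonneg _) (hp x)

theorem sq_sum_mul_biasVector_le [Fintype κ] {p : X → K} (hp : ∀ x, 0 < p x)
    (g : κ → X → K) (f : X → K) (a : κ → K) :
    (∑ j, a j * biasVector g f j) ^ 2 ≤
      (∑ x, p x * f x ^ 2) * ∑ j, ∑ k, a j * informationMatrix p g j k * a k := by
  rw [sum_mul_biasVector, sum_sum_mul_informationMatrix_mul]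
  exact sq_sum_mul_le_sum_mul_sq_mul_sum_sq_div univ (fun x _ => hp x) _ f

theorem global_score_bound_general [Fintype ι] [Fintype κ] {p : ι → X → K}
    (hp : ∀ i x, 0 < p i x) {w : ι → K} (hw : ∀ i, 0 ≤ w i) (f : ι → X → K) (g : κ → X → K)
    (A : Matrix κ ι K) :
    (∑ i, w i * ∑ j, A j i * biasVector g (f i) j) ^ 2 ≤
      (∑ i, w i * ∑ x, p i x * f i x ^ 2) *
        ∑ i, w i * ∑ j, ∑ k, A j i * informationMatrix (p i) g j k * A k i :=
  sq_sum_mul_le_sum_mul_mul_sum_mul_of_sq_le_mul univ (fun i _ => hw i)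
    (fun i _ => sum_nonneg fun x _ => mul_nonneg (hp i x).le (sq_nonneg _))
    (fun i _ => sum_sum_mul_informationMatrix_mul_nonneg (fun x => (hp i x).le) g (A.col i))
    (fun i _ => sq_sum_mul_biasVector_le (hp i) g (f i) (A.col i))

end InformationMatrix

/-- **Global-score bound (general hierarchy matrix).**
For every real `n × n` hierarchy matrix `A` with columns `a_i = (A j i)_j` such that
the denominator `∑ i, w i * (a_iᵀ C^(i) a_i)` is strictly positive, the weighted variance
satisfies `(∑ i, w i * Var i) * (∑ i, w i * a_iᵀ C^(i) a_i) ≥ (∑ i, w i * a_iᵀ b^(i))²`. -/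
theorem global_score_bound
    {X : Type*} [Fintype X] {n : ℕ}
    (p : Fin n → X → ℝ)
    (hp : ∀ i x, 0 < p i x)
    (hpsum : ∀ i, ∑ x : X, p i x = 1)
    (w : Fin n → ℝ) (hw : ∀ i, 0 ≤ w i)
    (h : X → ℝ) (g : Fin n → X → ℝ)
    (A : Matrix (Fin n) (Fin n) ℝ)
    (E : Fin n → ℝ) (hE : ∀ i, E i = ∑ x : X, p i x * h x)
    (V : Fin n → ℝ) (hV : ∀ i, V i = ∑ x : X, p i x * (h x - E i) ^ 2)
    (C : Fin n → Matrix (Fin n) (Fin n) ℝ)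
    (hC : ∀ i j k, C i j k = ∑ x : X, g j x * g k x / p i x)
    (b : Fin n → Fin n → ℝ)
    (hb : ∀ i j, b i j = ∑ x : X, g j x * (h x - E i))
    (hD : 0 < ∑ i, w i * ∑ j, ∑ k, A j i * C i j k * A k i) :
    (∑ i, w i * ∑ j, A j i * b i j) ^ 2 ≤
      (∑ i, w i * V i) * (∑ i, w i * ∑ j, ∑ k, A j i * C i j k * A k i) := by
  simpa only [hV, hC, hb, biasVector, informationMatrix, Matrix.of_apply] using
    global_score_bound_general hp hw (fun i x => h x - E i) g A
end

section
/- Let M be a nonzero real symmetric positive semidefinite k×k matrix and μ ∈ ℝ^k such that μ is NOT in the range of M. Then the generalized Rayleigh quotient is unbounded above: for every K ∈ ℝ there exists x ∈ ℝ^k with xᵀ M x > 0 and (μᵀ x)² > K · (xᵀ M x). -/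
open Matrix

/-!
If `μ` is not in the range of `M`, some `z` in the left kernel of `M` has `μ ⬝ᵥ z ≠ 0`. Start from
`y` with `0 < y ⬝ᵥ M *ᵥ y` and move along the line `y + t • z`. Since `z ᵥ* M = 0`, the quadratic
form of `M` is affine in `t`, whereas `(μ ⬝ᵥ (y + t • z)) ^ 2` is quadratic in `t` with positive
leading coefficient. Replacing `z` by `-z` if necessary, the affine function is nondecreasing, so
the quadratic form stays positive as `t` grows.
-/

theorem bilinForm_add_smul_self_of_apply_eq_zero {R V : Type*} [CommSemiring R] [AddCommMonoid V]
    [Module R V] (B : LinearMap.BilinForm R V) {z : V} (hz : B z = 0) (y : V) (t : R) :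
    B (y + t • z) (y + t • z) = B y y + t * B y z := by
  simp [hz]

section OrderedField

variable {𝕜 : Type*} [Field 𝕜] [LinearOrder 𝕜] [IsStrictOrderedRing 𝕜]

theorem exists_nonneg_quadratic_pos {a : 𝕜} (ha : 0 < a) (b c : 𝕜) :
    ∃ t, 0 ≤ t ∧ 0 < a * t ^ 2 + b * t + c := by
  set t := 1 + (|b| + |c|) / a with ht
  have one_le : 1 ≤ t := le_add_of_nonneg_right (by positivity)
  have mul_eq : a * t = a + |b| + |c| := by
    rw [ht]
    field_simp
    ring
  refine ⟨t, zero_le_one.trans one_le, ?_⟩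
  calc
    0 < a * t + (|b| + b) * t + (|c| * t + c) := by
      have hb : 0 ≤ |b| + b := by linarith [neg_abs_le b]
      have hc : 0 ≤ |c| * t + c := by
        linarith [neg_abs_le c, le_mul_of_one_le_right (abs_nonneg c) one_le]
      positivity
    _ = (a + |b| + |c|) * t + b * t + c := by ring
    _ = a * t ^ 2 + b * t + c := by rw [← mul_eq]; ring

variable {E : Type*} [AddCommGroup E] [Module 𝕜 E]

theorem exists_mul_bilinForm_self_lt_sq_of_nonneg (B : LinearMap.BilinForm 𝕜 E)
    (f : Module.Dual 𝕜 E) {y z : E} (hy : 0 < B y y) (hz : B z = 0) (hyz : 0 ≤ B y z)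
    (hfz : f z ≠ 0) (K : 𝕜) : ∃ x, 0 < B x x ∧ K * B x x < f x ^ 2 := by
  obtain ⟨t, ht, hpos⟩ := exists_nonneg_quadratic_pos (sq_pos_of_ne_zero hfz)
    (2 * f y * f z - K * B y z) (f y ^ 2 - K * B y y)
  refine ⟨y + t • z, ?_, ?_⟩ <;> rw [bilinForm_add_smul_self_of_apply_eq_zero B hz]
  · positivity
  · rw [map_add, map_smul, smul_eq_mul]
    linear_combination hpos

theorem exists_mul_bilinForm_self_lt_sq (B : LinearMap.BilinForm 𝕜 E) (f : Module.Dual 𝕜 E)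
    {y z : E} (hy : 0 < B y y) (hz : B z = 0) (hfz : f z ≠ 0) (K : 𝕜) :
    ∃ x, 0 < B x x ∧ K * B x x < f x ^ 2 := by
  rcases le_total 0 (B y z) with hyz | hyz
  · exact exists_mul_bilinForm_self_lt_sq_of_nonneg B f hy hz hyz hfz K
  · exact exists_mul_bilinForm_self_lt_sq_of_nonneg B f hy (z := -z) (by simpa using hz)
      (by simpa using hyz) (by simpa using hfz) K

end OrderedField

theorem exists_vecMul_eq_zero_of_notMem_range_mulVec {m n F : Type*} [Fintype m] [Fintype n]
    [Field F] {M : Matrix m n F} {μ : m → F} (hμ : μ ∉ Set.range M.mulVec) :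
    ∃ z, z ᵥ* M = 0 ∧ z ⬝ᵥ μ ≠ 0 := by
  classical
  have hμ' : μ ∉ LinearMap.range M.mulVecLin := hμ
  obtain ⟨f, hfμ, hf⟩ := Submodule.exists_le_ker_of_notMem hμ'
  obtain ⟨z, rfl⟩ := (dotProductEquiv F m).surjective f
  refine ⟨z, dotProduct_eq_zero _ fun v ↦ ?_, hfμ⟩
  rw [← dotProduct_mulVec]
  exact hf ⟨v, rfl⟩

open scoped ComplexOrder in
theorem exists_dotProduct_mulVec_pos_of_posSemidef {n 𝕜 : Type*} [Fintype n] [RCLike 𝕜]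
    {M : Matrix n n 𝕜} (hM : M.PosSemidef) (hM0 : M ≠ 0) :
    ∃ y, 0 < star y ⬝ᵥ M *ᵥ y := by
  obtain ⟨y, hy⟩ : ∃ y, M *ᵥ y ≠ 0 := by
    contrapose! hM0
    exact ext_iff_mulVec.mpr fun y ↦ by rw [hM0, zero_mulVec]
  exact ⟨y, (hM.dotProduct_mulVec_nonneg y).lt_of_ne'
    (mt (hM.dotProduct_mulVec_zero_iff y).mp hy)⟩

theorem rayleigh_quotient_unbounded_general {n 𝕜 : Type*} [Fintype n] [Field 𝕜] [LinearOrder 𝕜]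
    [IsStrictOrderedRing 𝕜] (M : Matrix n n 𝕜) (hM : ∃ y, 0 < y ⬝ᵥ M *ᵥ y)
    (μ : n → 𝕜) (hμ : μ ∉ Set.range M.mulVec) (K : 𝕜) :
    ∃ x, 0 < x ⬝ᵥ M *ᵥ x ∧ K * (x ⬝ᵥ M *ᵥ x) < (μ ⬝ᵥ x) ^ 2 := by
  classical
  obtain ⟨y, hy⟩ := hM
  obtain ⟨z, hz, hzμ⟩ := exists_vecMul_eq_zero_of_notMem_range_mulVec hμ
  have hBz : M.toBilin' z = 0 := LinearMap.ext fun v ↦ by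
    rw [toBilin'_apply', dotProduct_mulVec, hz, zero_dotProduct, LinearMap.zero_apply]
  simpa only [toBilin'_apply', dotProductEquiv_apply_apply] using
    exists_mul_bilinForm_self_lt_sq M.toBilin' (dotProductEquiv 𝕜 n μ)
      (by rwa [toBilin'_apply']) hBz (by rwa [dotProductEquiv_apply_apply, dotProduct_comm]) K

/-- **Divergent case of the Rayleigh quotient maximization.**
Let `M` be a nonzero real symmetric positive semidefinite `k × k` matrix and `μ` a vector
not in the range of `M`.  Then the generalized Rayleigh quotient `(μᵀ x)² / (xᵀ M x)` is
unbounded above: for every `K` there is `x` with `xᵀ M x > 0` and `(μᵀ x)² > K * (xᵀ M x)`. -/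
theorem rayleigh_quotient_unbounded
    {k : ℕ} (M : Matrix (Fin k) (Fin k) ℝ) (hM : M.PosSemidef) (hM0 : M ≠ 0)
    (μ : Fin k → ℝ) (hμ : ¬ ∃ v : Fin k → ℝ, M.mulVec v = μ) :
    ∀ K : ℝ, ∃ x : Fin k → ℝ, 0 < x ⬝ᵥ M.mulVec x ∧
      K * (x ⬝ᵥ M.mulVec x) < (μ ⬝ᵥ x) ^ 2 := by
  exact rayleigh_quotient_unbounded_general M
    (exists_dotProduct_mulVec_pos_of_posSemidef hM hM0) μ hμ
end

section
/- Let C_1,…,C_n be real symmetric positive semidefinite k×k matrices, w_1,…,w_n ≥ 0, and b_1,…,b_n ∈ ℝ^k with each b_i in the range of C_i, say C_i v_i = b_i. Set b_w = Σ_i w_i b_i and C_w = Σ_i w_i C_i, and let u ∈ ℝ^k satisfy C_w u = b_w. Then Σ_{i=1}^n w_i · (b_iᵀ v_i) ≥ b_wᵀ u; that is, the fully global level dominates the global Barankin level. -/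
open Finset Matrix

/-!
Replacing `C i` by `w i • C i` absorbs the weights. For Hermitian `A i` with
`(∑ i, A i) u = ∑ i, A i (v i)`, completing the square shows that the gap between the two sides is
`∑ i, (v i - u)ᴴ (A i) (v i - u)`, and each summand is nonnegative when `A i` is positive
semidefinite.
-/

section Hermitian

variable {ι m R : Type*} [Fintype m]

theorem star_dotProduct_mulVec_of_isHermitian [NonUnitalSemiring R] [StarRing R]
    {A : Matrix m m R} (hA : A.IsHermitian) (x y : m → R) :
    star x ⬝ᵥ A *ᵥ y = star (A *ᵥ x) ⬝ᵥ y := by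
  rw [star_mulVec, hA.eq, dotProduct_mulVec]

theorem sum_star_sub_dotProduct_mulVec_sub [NonUnitalRing R] [StarRing R]
    {s : Finset ι} {A : ι → Matrix m m R} (hA : ∀ i ∈ s, (A i).IsHermitian)
    {v : ι → m → R} {u : m → R}
    (hu : (∑ i ∈ s, A i) *ᵥ u = ∑ i ∈ s, A i *ᵥ v i) :
    ∑ i ∈ s, star (v i - u) ⬝ᵥ A i *ᵥ (v i - u) =
      ∑ i ∈ s, star (A i *ᵥ v i) ⬝ᵥ v i - star (∑ i ∈ s, A i *ᵥ v i) ⬝ᵥ u := by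
  have residual_eq_zero : ∑ i ∈ s, A i *ᵥ (v i - u) = 0 := by
    simp only [mulVec_sub, sum_sub_distrib, ← sum_mulVec, hu, sub_self]
  calc ∑ i ∈ s, star (v i - u) ⬝ᵥ A i *ᵥ (v i - u)
    _ = ∑ i ∈ s, star (v i) ⬝ᵥ A i *ᵥ (v i - u) -
          star u ⬝ᵥ ∑ i ∈ s, A i *ᵥ (v i - u) := by
      simp only [star_sub, sub_dotProduct, sum_sub_distrib, dotProduct_sum]
    _ = ∑ i ∈ s, star (A i *ᵥ v i) ⬝ᵥ (v i - u) := by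
      rw [residual_eq_zero, dotProduct_zero, sub_zero]
      exact sum_congr rfl fun i hi ↦ star_dotProduct_mulVec_of_isHermitian (hA i hi) _ _
    _ = ∑ i ∈ s, star (A i *ᵥ v i) ⬝ᵥ v i - star (∑ i ∈ s, A i *ᵥ v i) ⬝ᵥ u := by
      simp only [dotProduct_sub, sum_sub_distrib, star_sum, sum_dotProduct]

theorem star_sum_mulVec_dotProduct_le [Ring R] [StarRing R] [PartialOrder R]
    [IsOrderedAddMonoid R] {s : Finset ι} {A : ι → Matrix m m R}
    (hA : ∀ i ∈ s, (A i).PosSemidef) {v : ι → m → R} {u : m → R}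
    (hu : (∑ i ∈ s, A i) *ᵥ u = ∑ i ∈ s, A i *ᵥ v i) :
    star (∑ i ∈ s, A i *ᵥ v i) ⬝ᵥ u ≤ ∑ i ∈ s, star (A i *ᵥ v i) ⬝ᵥ v i := by
  rw [← sub_nonneg, ← sum_star_sub_dotProduct_mulVec_sub (fun i hi ↦ (hA i hi).isHermitian) hu]
  exact sum_nonneg fun i hi ↦ (hA i hi).dotProduct_mulVec_nonneg _

end Hermitian

theorem fully_global_dominates_barankin_general {ι m R : Type*} [Fintype m] [CommRing R]
    [PartialOrder R] [StarRing R] [StarOrderedRing R] {s : Finset ι}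
    {C : ι → Matrix m m R} (hC : ∀ i ∈ s, (C i).PosSemidef)
    {w : ι → R} (hw : ∀ i ∈ s, 0 ≤ w i)
    {b v : ι → m → R} (hv : ∀ i ∈ s, C i *ᵥ v i = b i)
    {u : m → R} (hu : (∑ i ∈ s, w i • C i) *ᵥ u = ∑ i ∈ s, w i • b i) :
    star (∑ i ∈ s, w i • b i) ⬝ᵥ u ≤ ∑ i ∈ s, w i * (star (b i) ⬝ᵥ v i) := by
  have weighted_mulVec (i) (hi : i ∈ s) : (w i • C i) *ᵥ v i = w i • b i := by
    rw [smul_mulVec, hv i hi]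
  have weighted_dotProduct (i) (hi : i ∈ s) :
      star ((w i • C i) *ᵥ v i) ⬝ᵥ v i = w i * (star (b i) ⬝ᵥ v i) := by
    rw [weighted_mulVec i hi, star_smul, (hw i hi).isSelfAdjoint.star_eq, smul_dotProduct,
      smul_eq_mul]
  rw [← sum_congr rfl weighted_mulVec] at hu ⊢
  rw [← sum_congr rfl weighted_dotProduct]
  exact star_sum_mulVec_dotProduct_le (fun i hi ↦ (hC i hi).smul (hw i hi)) hu

/-- **The fully global level dominates the global Barankin level.**
Let `C_1,…,C_n` be real symmetric positive semidefinite `k × k` matrices, `w_i ≥ 0`, and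
`b_i` in the range of `C_i`, say `C_i v_i = b_i`.  With `b_w = ∑ i, w i • b i` and
`C_w = ∑ i, w i • C i`, for any `u` with `C_w u = b_w` one has
`∑ i, w i * (b_iᵀ v_i) ≥ b_wᵀ u`. -/
theorem fully_global_dominates_barankin
    {n k : ℕ}
    (C : Fin n → Matrix (Fin k) (Fin k) ℝ)
    (hC : ∀ i, (C i).PosSemidef)
    (w : Fin n → ℝ) (hw : ∀ i, 0 ≤ w i)
    (b v : Fin n → Fin k → ℝ)
    (hv : ∀ i, (C i).mulVec (v i) = b i)
    (bw : Fin k → ℝ) (hbw : bw = ∑ i, w i • b i)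
    (Cw : Matrix (Fin k) (Fin k) ℝ) (hCw : Cw = ∑ i, w i • C i)
    (u : Fin k → ℝ) (hu : Cw.mulVec u = bw) :
    bw ⬝ᵥ u ≤ ∑ i, w i * (b i ⬝ᵥ v i) := by
  subst hbw hCw
  simpa only [star_trivial] using
    fully_global_dominates_barankin_general (fun i _ ↦ hC i) (fun i _ ↦ hw i) (fun i _ ↦ hv i) hu
end

section
/- Suppose that for each i with w_i ≠ 0 there exists a vector u^(i) ∈ ℝ^n such that C^(i) u^(i) = b^(i) and, for every outcome x ∈ X, g(x)ᵀ u^(i) = p_i(x) · (h(x) − E_i), where g(x) = (g_1(x),…,g_n(x)). Then the fully global bound is saturated with equality: Σ_{i=1}^n w_i · Var_i = Σ_{i=1}^n w_i · (b^(i)ᵀ u^(i)). -/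
open Finset Matrix

theorem mulVec_dotProduct_eq_sum_mul_sq {R X κ : Type*} [CommSemiring R] [Fintype X] [Fintype κ]
    (G : Matrix κ X R) (p r : X → R) (u : κ → R)
    (hsat : ∀ x, (fun j => G j x) ⬝ᵥ u = p x * r x) :
    (G *ᵥ r) ⬝ᵥ u = ∑ x, p x * r x ^ 2 := by
  have vecMul_eq (x : X) : (u ᵥ* G) x = p x * r x := (dotProduct_comm _ _).trans (hsat x)
  calc (G *ᵥ r) ⬝ᵥ u = u ⬝ᵥ (G *ᵥ r) := dotProduct_comm _ _
    _ = (u ᵥ* G) ⬝ᵥ r := dotProduct_mulVec _ _ _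
    _ = ∑ x, p x * r x ^ 2 := sum_congr rfl fun x _ => by rw [vecMul_eq, mul_assoc, sq]

theorem fully_global_bound_saturation_general
    {R X ι κ : Type*} [CommRing R] [Fintype X] [Fintype ι] [Fintype κ]
    (p : ι → X → R) (w : ι → R) (h : X → R) (g : κ → X → R) (c : ι → R)
    (V : ι → R) (hV : ∀ i, V i = ∑ x, p i x * (h x - c i) ^ 2)
    (b : ι → κ → R) (hb : ∀ i j, b i j = ∑ x, g j x * (h x - c i))
    (u : ι → κ → R)
    (hsat : ∀ i, w i ≠ 0 → ∀ x, (fun j => g j x) ⬝ᵥ u i = p i x * (h x - c i)) :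
    ∑ i, w i * V i = ∑ i, w i * (b i ⬝ᵥ u i) := by
  refine sum_congr rfl fun i _ => ?_
  rcases eq_or_ne (w i) 0 with hwi | hwi
  · rw [hwi, zero_mul, zero_mul]
  · have b_eq : b i = of g *ᵥ fun x => h x - c i := funext (hb i)
    rw [hV, b_eq, mulVec_dotProduct_eq_sum_mul_sq (of g) (p i) _ (u i) (hsat i hwi)]

/-- **Saturation of the fully global bound.**
Suppose that for each `i` with `w i ≠ 0` the vector `u^(i)` satisfies `C^(i) u^(i) = b^(i)`
and the outcome-space saturation equations `g(x)ᵀ u^(i) = p_i(x) (h(x) − E_i)` for all `x`.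
Then `∑ i, w i * Var i = ∑ i, w i * (b^(i)ᵀ u^(i))`. -/
theorem fully_global_bound_saturation
    {X : Type*} [Fintype X] {n : ℕ}
    (p : Fin n → X → ℝ)
    (hp : ∀ i x, 0 < p i x)
    (hpsum : ∀ i, ∑ x : X, p i x = 1)
    (w : Fin n → ℝ) (hw : ∀ i, 0 ≤ w i)
    (h : X → ℝ) (g : Fin n → X → ℝ)
    (E : Fin n → ℝ) (hE : ∀ i, E i = ∑ x : X, p i x * h x)
    (V : Fin n → ℝ) (hV : ∀ i, V i = ∑ x : X, p i x * (h x - E i) ^ 2)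
    (C : Fin n → Matrix (Fin n) (Fin n) ℝ)
    (hC : ∀ i j k, C i j k = ∑ x : X, g j x * g k x / p i x)
    (b : Fin n → Fin n → ℝ)
    (hb : ∀ i j, b i j = ∑ x : X, g j x * (h x - E i))
    (u : Fin n → Fin n → ℝ)
    (hu : ∀ i, w i ≠ 0 → (C i).mulVec (u i) = b i)
    (hsat : ∀ i, w i ≠ 0 → ∀ x : X,
      (fun j => g j x) ⬝ᵥ u i = p i x * (h x - E i)) :
    ∑ i, w i * V i = ∑ i, w i * (b i ⬝ᵥ u i) :=
  fully_global_bound_saturation_general p w h g E V hV b hb u hsat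
end

section
/- Let X be a finite set, let p_j, p_k, p_n : X → ℝ be functions with p_n(x) > 0 for all x, let q_j, q_k : X → ℝ be arbitrary functions, and let m ≥ 2 be an integer. For a tuple x⃗ = (x_1,…,x_m) ∈ X^m define G_j(x⃗) = Σ_{r=1}^m q_j(x_r) · Π_{s ≠ r} p_j(x_s), and similarly G_k. Set Λ = Σ_x p_j(x)p_k(x)/p_n(x), R_{jk} = Σ_x q_j(x)p_k(x)/p_n(x), R_{kj} = Σ_x q_k(x)p_j(x)/p_n(x), and C_{jk} = Σ_x q_j(x)q_k(x)/p_n(x). Then Σ_{x⃗ ∈ X^m} G_j(x⃗)·G_k(x⃗) / Π_{r=1}^m p_n(x_r) = m(m−1)·Λ^{m−2}·R_{jk}·R_{kj} + m·Λ^{m−1}·C_{jk}. -/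
open Finset

/-! Each `G` is a sum over `r` of product functions on `X^m` in which the `r`-th factor is `q` and
all the others are `p`. Sums of product functions over `X^m` factor over the coordinates, so the
pair of terms `(r, t)` contributes a product of one-coordinate sums. If `r = t`, one coordinate
carries both derivatives and gives `C_{jk}`; if `r ≠ t`, two coordinates carry one derivative each
and give `R_{jk}` and `R_{kj}`. The remaining coordinates all give `Λ`. -/

section WeightedPairing

variable {X R : Type*} [Fintype X] [CommSemiring R]

/-- The symmetric bilinear pairing `∑ x, f x * g x * w x` of functions on a finite type with weight
`w`. The quantities `Λ`, `R_{jk}`, `R_{kj}` and `C_{jk}` are its values for the weight `1 / p_n`; a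
weight in place of a denominator lets the argument run in any commutative semiring. -/
def weightedPairing (w f g : X → R) : R :=
  ∑ x, f x * g x * w x

theorem weightedPairing_comm (w f g : X → R) : weightedPairing w f g = weightedPairing w g f := by
  simp only [weightedPairing, mul_comm (f _)]

end WeightedPairing

section UpdatedProducts

variable {ι R : Type*} [Fintype ι] [DecidableEq ι] [CommMonoid R] {A B : ι → Type*}

theorem prod_apply_update (F : ∀ i, A i → R) (a : ∀ i, A i) (r : ι) (a' : A r) :
    ∏ s, F s (Function.update a r a' s) = F r a' * ∏ s ∈ univ.erase r, F s (a s) := by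
  simp only [Function.apply_update F, prod_update_of_mem (mem_univ r), sdiff_singleton_eq_erase]

theorem prod_apply_update_update_self (F : ∀ i, A i → B i → R) (a : ∀ i, A i) (b : ∀ i, B i)
    (r : ι) (a' : A r) (b' : B r) :
    ∏ s, F s (Function.update a r a' s) (Function.update b r b' s) =
      F r a' b' * ∏ s ∈ univ.erase r, F s (a s) (b s) := by
  rw [← mul_prod_erase univ _ (mem_univ r), Function.update_self, Function.update_self]
  congr 1
  refine prod_congr rfl fun s hs => ?_
  rw [Function.update_of_ne (ne_of_mem_erase hs), Function.update_of_ne (ne_of_mem_erase hs)]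

theorem prod_apply_update_update_of_ne (F : ∀ i, A i → B i → R) (a : ∀ i, A i) (b : ∀ i, B i)
    {r t : ι} (hrt : r ≠ t) (a' : A r) (b' : B t) :
    ∏ s, F s (Function.update a r a' s) (Function.update b t b' s) =
      F r a' (b r) * F t (a t) b' * ∏ s ∈ (univ.erase r).erase t, F s (a s) (b s) := by
  have ht : t ∈ univ.erase r := mem_erase.2 ⟨hrt.symm, mem_univ t⟩
  rw [← mul_prod_erase univ _ (mem_univ r), ← mul_prod_erase _ _ ht, Function.update_self,
    Function.update_self, Function.update_of_ne hrt, Function.update_of_ne hrt.symm, mul_assoc]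
  congr 2
  refine prod_congr rfl fun s hs => ?_
  obtain ⟨hst, hs⟩ := mem_erase.1 hs
  rw [Function.update_of_ne (ne_of_mem_erase hs), Function.update_of_ne hst]

end UpdatedProducts

section ProductFunctions

variable {ι R : Type*} [Fintype ι] [DecidableEq ι] [CommSemiring R] {X : ι → Type*}

/-- The Leibniz-rule derivative of the product function `xs ↦ ∏ i, p i (xs i)` when each `q i` is
the derivative of `p i`. For constant families this is `G` of the theorem. -/
def productDeriv (p q : ∀ i, X i → R) (xs : ∀ i, X i) : R :=
  ∑ r, q r (xs r) * ∏ s ∈ univ.erase r, p s (xs s)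

theorem productDeriv_eq_sum_prod_update (p q : ∀ i, X i → R) (xs : ∀ i, X i) :
    productDeriv p q xs = ∑ r, ∏ s, Function.update p r (q r) s (xs s) :=
  sum_congr rfl fun r _ => (prod_apply_update (fun s f => f (xs s)) p r (q r)).symm

variable [∀ i, Fintype (X i)]

theorem sum_prod_mul_prod_mul_prod (w f g : ∀ i, X i → R) :
    ∑ xs : ∀ i, X i, (∏ s, f s (xs s)) * (∏ s, g s (xs s)) * ∏ s, w s (xs s) =
      ∏ s, weightedPairing (w s) (f s) (g s) := by
  simp only [weightedPairing, Fintype.prod_sum, prod_mul_distrib]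

theorem sum_productDeriv_mul_productDeriv_eq_sum_sum_prod (w p q p' q' : ∀ i, X i → R) :
    ∑ xs, productDeriv p q xs * productDeriv p' q' xs * ∏ s, w s (xs s) =
      ∑ r, ∑ t, ∏ s, weightedPairing (w s) (Function.update p r (q r) s)
        (Function.update p' t (q' t) s) := by
  simp only [productDeriv_eq_sum_prod_update, sum_mul_sum]
  simp only [sum_mul, ← sum_prod_mul_prod_mul_prod]
  rw [sum_comm]
  exact sum_congr rfl fun r _ => sum_comm

theorem sum_productDeriv_mul_productDeriv (w p q p' q' : ∀ i, X i → R) :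
    ∑ xs, productDeriv p q xs * productDeriv p' q' xs * ∏ s, w s (xs s) =
      ∑ r, (∑ t ∈ univ.erase r,
          weightedPairing (w r) (q r) (p' r) * weightedPairing (w t) (p t) (q' t) *
            ∏ s ∈ (univ.erase r).erase t, weightedPairing (w s) (p s) (p' s)) +
        ∑ r, weightedPairing (w r) (q r) (q' r) *
          ∏ s ∈ univ.erase r, weightedPairing (w s) (p s) (p' s) := by
  rw [sum_productDeriv_mul_productDeriv_eq_sum_sum_prod, ← sum_add_distrib]
  refine sum_congr rfl fun r _ => ?_
  rw [← sum_erase_add univ _ (mem_univ r),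
    prod_apply_update_update_self fun s => weightedPairing (w s)]
  congr 1
  exact sum_congr rfl fun t ht => prod_apply_update_update_of_ne
    (fun s => weightedPairing (w s)) p p' (ne_of_mem_erase ht).symm (q r) (q' t)

end ProductFunctions

/-- Where the exponents `card ι - 2` and `card ι - 1` truncate, their coefficients vanish. -/
theorem multishot_information_decomposition_general
    {ι X R : Type*} [Fintype ι] [DecidableEq ι] [Fintype X] [CommRing R] (w p q p' q' : X → R) :
    ∑ xs : ι → X, productDeriv (fun _ => p) (fun _ => q) xs *
        productDeriv (fun _ => p') (fun _ => q') xs * ∏ r, w (xs r) =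
      (Fintype.card ι : R) * ((Fintype.card ι : R) - 1) *
          weightedPairing w p p' ^ (Fintype.card ι - 2) *
          weightedPairing w q p' * weightedPairing w q' p +
        (Fintype.card ι : R) * weightedPairing w p p' ^ (Fintype.card ι - 1) *
          weightedPairing w q q' := by
  have card_erase (r : ι) : #(univ.erase r) = Fintype.card ι - 1 := card_erase_of_mem (mem_univ r)
  have offDiagonal (r : ι) :
      ∑ t ∈ univ.erase r, weightedPairing w q p' * weightedPairing w p q' *
          ∏ _s ∈ (univ.erase r).erase t, weightedPairing w p p' =
        ((Fintype.card ι : R) - 1) * (weightedPairing w q p' * weightedPairing w q' p *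
          weightedPairing w p p' ^ (Fintype.card ι - 2)) := by
    have card_pos : 1 ≤ Fintype.card ι := Fintype.card_pos_iff.2 ⟨r⟩
    rw [sum_congr rfl fun t ht => by rw [prod_const, card_erase_of_mem ht, card_erase, Nat.sub_sub],
      sum_const, card_erase, nsmul_eq_mul, Nat.cast_sub card_pos, Nat.cast_one,
      weightedPairing_comm w p q']
  rw [sum_productDeriv_mul_productDeriv (fun _ => w)]
  simp only [offDiagonal]
  simp only [prod_const, card_erase, sum_const, card_univ, nsmul_eq_mul]
  ring

/-- **Multi-shot information matrix decomposition.**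
With `G_j(x⃗) = ∑ r, q_j(x_r) ∏_{s ≠ r} p_j(x_s)` (the θ-derivative of the `m`-fold product
distribution), `Λ = ∑ x, p_j p_k / p_n`, `R_{jk} = ∑ x, q_j p_k / p_n`,
`R_{kj} = ∑ x, q_k p_j / p_n`, and `C_{jk} = ∑ x, q_j q_k / p_n`, one has
`∑_{x⃗} G_j(x⃗) G_k(x⃗) / ∏ r, p_n(x_r) = m(m−1) Λ^{m−2} R_{jk} R_{kj} + m Λ^{m−1} C_{jk}`. -/
theorem multishot_information_decomposition
    {X : Type*} [Fintype X]
    (pj pk pn : X → ℝ) (hpn : ∀ x, 0 < pn x)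
    (qj qk : X → ℝ)
    (m : ℕ) (hm : 2 ≤ m)
    (Λ Rjk Rkj Cjk : ℝ)
    (hΛ : Λ = ∑ x : X, pj x * pk x / pn x)
    (hRjk : Rjk = ∑ x : X, qj x * pk x / pn x)
    (hRkj : Rkj = ∑ x : X, qk x * pj x / pn x)
    (hCjk : Cjk = ∑ x : X, qj x * qk x / pn x) :
    ∑ xs : Fin m → X,
        (∑ r : Fin m, qj (xs r) * ∏ s ∈ Finset.univ.erase r, pj (xs s)) *
          (∑ r : Fin m, qk (xs r) * ∏ s ∈ Finset.univ.erase r, pk (xs s)) /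
          ∏ r : Fin m, pn (xs r)
      = (m : ℝ) * ((m : ℝ) - 1) * Λ ^ (m - 2) * Rjk * Rkj
        + (m : ℝ) * Λ ^ (m - 1) * Cjk := by
  subst hΛ hRjk hRkj hCjk
  simpa only [productDeriv, weightedPairing, div_eq_mul_inv, prod_inv_distrib, Fintype.card_fin]
    using multishot_information_decomposition_general (ι := Fin m) (fun x => (pn x)⁻¹) pj qj pk qk
end

section
/- Fix reals f_1,…,f_n ∈ (−1,1) and c_1,…,c_n ∈ ℝ, an index i, and an integer m ≥ 2. On the binary outcome set X = {+1,−1} let p_j(x) = (1 + x·f_j)/2, and for x⃗ ∈ X^m define G_j(x⃗) = Σ_{r=1}^m (x_r·c_j/2) · Π_{s ≠ r} p_j(x_s). Then for all j, k: Σ_{x⃗ ∈ X^m} G_j(x⃗)·G_k(x⃗)/Π_{r=1}^m p_i(x_r) = m·(1+Δ)^{m−2}·(1+mΔ) · c_j·c_k/(1−f_i²), where Δ = (f_j−f_i)(f_k−f_i)/(1−f_i²). In particular 1+Δ > 0, and for m = 1 the left-hand side (with G_j(x) = x·c_j/2) equals c_j·c_k/(1−f_i²). -/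
open Finset

/-!
For a weight `w`, consider the bilinear form `⟪u, v⟫ = ∑ x, u x * v x / w x`. On product spaces
it is multiplicative on product functions, so expanding the first variations of two `m`-fold
products gives `m ⟪a, b⟫ ⟪u, v⟫^(m-1) + m (m-1) ⟪a, v⟫ ⟪u, b⟫ ⟪u, v⟫^(m-2)`.

The binary model is affine: `p_j = p_i + (f_j - f_i) e` with `e x = x / 2`, and its variations are
the multiples `c_j e`. For the weight `p_i`, the vectors `p_i` and `e` are orthogonal, with
`⟪p_i, p_i⟫ = 1` and `⟪e, e⟫ = 1 / (1 - f_i ^ 2)`, so all four pairings can be read off; in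
particular `⟪p_j, p_k⟫ = 1 + Δ`, which is a sum of positive terms. Apart from the value of
`⟪e, e⟫`, only the affine dependence on `f` matters, not the number of outcomes.
-/

section ProductRule

variable {R α ι : Type*} [CommSemiring R] [Fintype ι] [DecidableEq ι]

/-- The first variation of `x ↦ ∏ s, u (x s)` when `u` varies in the direction `a`, in the form
given by the product rule. -/
def firstVariation (u a : α → R) (x : ι → α) : R :=
  ∑ r, a (x r) * ∏ s ∈ univ.erase r, u (x s)

theorem firstVariation_eq_sum_prod_update (u a : α → R) :
    firstVariation u a =
      ∑ r : ι, fun x : ι → α => ∏ s, Function.update (fun _ => u) r a s (x s) := by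
  ext x
  rw [Finset.sum_apply]
  refine sum_congr rfl fun r _ => ?_
  rw [← mul_prod_erase univ _ (mem_univ r), Function.update_self]
  congr 1
  refine prod_congr rfl fun s hs => ?_
  rw [Function.update_of_ne (ne_of_mem_erase hs)]

theorem prod_update_update {β γ M : Type*} [CommMonoid M] (g : β → γ → M) (u a : β) (v b : γ)
    (r t : ι) :
    ∏ s, g (Function.update (fun _ => u) r a s) (Function.update (fun _ => v) t b s) =
      if r = t then g a b * g u v ^ (Fintype.card ι - 1)
      else g a v * g u b * g u v ^ (Fintype.card ι - 2) := by
  rw [← mul_prod_erase univ _ (mem_univ r), Function.update_self]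
  split_ifs with hrt
  · subst hrt
    have hrest : ∀ s ∈ univ.erase r,
        g (Function.update (fun _ => u) r a s) (Function.update (fun _ => v) r b s) = g u v := by
      intro s hs
      simp only [Function.update_of_ne (ne_of_mem_erase hs)]
    rw [Function.update_self, prod_congr rfl hrest, prod_const, card_erase_of_mem (mem_univ r),
      card_univ]
  · have ht : t ∈ univ.erase r := mem_erase.2 ⟨Ne.symm hrt, mem_univ t⟩
    have hrest : ∀ s ∈ (univ.erase r).erase t,
        g (Function.update (fun _ => u) r a s) (Function.update (fun _ => v) t b s) = g u v := by
      intro s hs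
      rw [Function.update_of_ne (ne_of_mem_erase (mem_of_mem_erase hs)),
        Function.update_of_ne (ne_of_mem_erase hs)]
    rw [← mul_prod_erase _ _ ht, prod_congr rfl hrest, prod_const, card_erase_of_mem ht,
      card_erase_of_mem (mem_univ r), card_univ, Nat.sub_sub, Function.update_self,
      Function.update_of_ne hrt, Function.update_of_ne (Ne.symm hrt), mul_assoc]

end ProductRule

theorem sum_sum_ite_eq_const {R ι : Type*} [CommRing R] [Fintype ι] [DecidableEq ι]
    (A B : R) :
    ∑ r : ι, ∑ t : ι, (if r = t then A else B) =
      Fintype.card ι * A + Fintype.card ι * (Fintype.card ι - 1) * B := by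
  have hsplit (r t : ι) : (if r = t then A else B) = B + if r = t then A - B else 0 := by
    split_ifs <;> ring
  simp only [hsplit, sum_add_distrib, sum_ite_eq, mem_univ, if_true, sum_const, card_univ,
    nsmul_eq_mul]
  ring

section InformationForm

variable {K α ι : Type*} [Field K] [Fintype α] [Fintype ι] [DecidableEq ι]

/-- The bilinear form `⟪u, v⟫ = ∑ x, u x * v x / w x` on functions on a finite outcome set. When `w`
is a probability vector and `u`, `v` are derivatives of probability vectors, its values are the
entries of an information matrix. Outcomes with `w x = 0` contribute `0`. -/
def informationForm (w : α → K) : LinearMap.BilinForm K (α → K) :=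
  LinearMap.mk₂ K (fun u v => ∑ x, u x * v x / w x)
    (fun u u' v => by simp only [Pi.add_apply, add_mul, add_div, sum_add_distrib])
    (fun c u v => by simp only [Pi.smul_apply, smul_eq_mul, mul_assoc, mul_div_assoc, mul_sum])
    (fun u v v' => by simp only [Pi.add_apply, mul_add, add_div, sum_add_distrib])
    (fun c u v => by
      simp only [Pi.smul_apply, smul_eq_mul, mul_left_comm _ c, mul_div_assoc, mul_sum])

theorem informationForm_apply (w u v : α → K) :
    informationForm w u v = ∑ x, u x * v x / w x :=
  rfl

theorem informationForm_comm (w u v : α → K) : informationForm w u v = informationForm w v u := by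
  simp only [informationForm_apply, mul_comm]

theorem informationForm_self_left {w : α → K} (hw : ∀ x, w x ≠ 0) (v : α → K) :
    informationForm w w v = ∑ x, v x := by
  simp only [informationForm_apply, mul_div_cancel_left₀ _ (hw _)]

theorem informationForm_prod {β : ι → Type*} [∀ s, Fintype (β s)] (w u v : ∀ s, β s → K) :
    informationForm (fun x : ∀ s, β s => ∏ s, w s (x s)) (fun x => ∏ s, u s (x s))
        (fun x => ∏ s, v s (x s)) =
      ∏ s, informationForm (w s) (u s) (v s) := by
  simp only [informationForm_apply, ← prod_mul_distrib, ← prod_div_distrib]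
  exact (Fintype.prod_sum fun s x => u s x * v s x / w s x).symm

theorem informationForm_firstVariation (w u v a b : α → K) :
    informationForm (fun x : ι → α => ∏ s, w (x s)) (firstVariation u a) (firstVariation v b) =
      Fintype.card ι *
          (informationForm w a b * informationForm w u v ^ (Fintype.card ι - 1)) +
        Fintype.card ι * (Fintype.card ι - 1) *
          (informationForm w a v * informationForm w u b *
            informationForm w u v ^ (Fintype.card ι - 2)) := by
  simp only [firstVariation_eq_sum_prod_update, map_sum, LinearMap.sum_apply]
  rw [sum_comm, ← sum_sum_ite_eq_const]
  refine sum_congr rfl fun r _ => sum_congr rfl fun t _ => ?_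
  rw [informationForm_prod fun _ => w, prod_update_update fun u v => informationForm w u v]

end InformationForm

section AffineModel

variable {K α ι : Type*} [Field K] [Fintype α] [Fintype ι] [DecidableEq ι] {w e : α → K}

theorem informationForm_add_smul_add_smul (hw : ∀ x, w x ≠ 0) (hw_sum : ∑ x, w x = 1)
    (he_sum : ∑ x, e x = 0) (s t : K) :
    informationForm w (w + s • e) (w + t • e) = 1 + s * t * informationForm w e e := by
  simp only [map_add, map_smul, LinearMap.add_apply, LinearMap.smul_apply, smul_eq_mul,
    informationForm_comm w e w, informationForm_self_left hw, hw_sum, he_sum]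
  ring

theorem informationForm_smul_add_smul (hw : ∀ x, w x ≠ 0) (he_sum : ∑ x, e x = 0) (c t : K) :
    informationForm w (c • e) (w + t • e) = c * t * informationForm w e e := by
  simp only [map_add, map_smul, LinearMap.smul_apply, smul_eq_mul,
    informationForm_comm w e w, informationForm_self_left hw, he_sum]
  ring

theorem informationForm_smul_smul (w e : α → K) (c d : K) :
    informationForm w (c • e) (d • e) = c * d * informationForm w e e := by
  simp only [map_smul, LinearMap.smul_apply, smul_eq_mul]
  ring

theorem informationForm_firstVariation_add_smul (hw : ∀ x, w x ≠ 0) (hw_sum : ∑ x, w x = 1)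
    (he_sum : ∑ x, e x = 0) (hι : 2 ≤ Fintype.card ι) (s t c d : K) :
    informationForm (fun x : ι → α => ∏ r, w (x r)) (firstVariation (w + s • e) (c • e))
        (firstVariation (w + t • e) (d • e)) =
      Fintype.card ι * (1 + s * t * informationForm w e e) ^ (Fintype.card ι - 2) *
        (1 + Fintype.card ι * (s * t * informationForm w e e)) *
        (c * d * informationForm w e e) := by
  have hpred : Fintype.card ι - 1 = Fintype.card ι - 2 + 1 := by omega
  rw [informationForm_firstVariation, informationForm_comm w (w + s • e) (d • e),
    informationForm_add_smul_add_smul hw hw_sum he_sum, informationForm_smul_add_smul hw he_sum,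
    informationForm_smul_add_smul hw he_sum, informationForm_smul_smul, hpred, pow_succ]
  ring

end AffineModel

theorem informationForm_pos {K α : Type*} [Field K] [LinearOrder K] [IsStrictOrderedRing K]
    [Fintype α] [Nonempty α] {w u v : α → K} (hw : ∀ x, 0 < w x) (hu : ∀ x, 0 < u x)
    (hv : ∀ x, 0 < v x) : 0 < informationForm w u v :=
  sum_pos (fun x _ => div_pos (mul_pos (hu x) (hv x)) (hw x)) univ_nonempty

theorem binary_model_information_matrix_general
    {K α J : Type*} [Field K] [LinearOrder K] [IsStrictOrderedRing K] [Fintype α]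
    (f c : J → K) (p a : J → α → K) (e : α → K) (i : J)
    (hp_pos : ∀ j x, 0 < p j x) (hp_sum : ∑ x, p i x = 1) (he_sum : ∑ x, e x = 0)
    (hp : ∀ j, p j = p i + (f j - f i) • e) (ha : ∀ j, a j = c j • e)
    (m : ℕ) (hm : 2 ≤ m) (j k : J) :
    0 < 1 + (f j - f i) * (f k - f i) * informationForm (p i) e e ∧
    informationForm (fun x : Fin m → α => ∏ r, p i (x r))
        (firstVariation (p j) (a j)) (firstVariation (p k) (a k)) =
      (m : K) * (1 + (f j - f i) * (f k - f i) * informationForm (p i) e e) ^ (m - 2) *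
        (1 + (m : K) * ((f j - f i) * (f k - f i) * informationForm (p i) e e)) *
        (c j * c k * informationForm (p i) e e) ∧
    informationForm (p i) (a j) (a k) = c j * c k * informationForm (p i) e e := by
  have hp_ne : ∀ x, p i x ≠ 0 := fun x => (hp_pos i x).ne'
  refine ⟨?_, ?_, ?_⟩
  · have : Nonempty α := by
      by_contra! hempty
      simp at hp_sum
    rw [← informationForm_add_smul_add_smul hp_ne hp_sum he_sum, ← hp j, ← hp k]
    exact informationForm_pos (hp_pos i) (hp_pos j) (hp_pos k)
  · have hrep := informationForm_firstVariation_add_smul (ι := Fin m) hp_ne hp_sum he_sum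
      (by rwa [Fintype.card_fin]) (f j - f i) (f k - f i) (c j) (c k)
    rwa [← hp j, ← hp k, ← ha j, ← ha k, Fintype.card_fin] at hrep
  · rw [ha j, ha k, informationForm_smul_smul]

section BinaryModel

variable {K : Type*} [Field K]

/-- The outcome `+1` or `-1` encoded by a Boolean. -/
def outcomeSign (x : Bool) : K :=
  if x then 1 else -1

/-- The two-outcome probability vector with mean `f`. -/
def binaryProb (f : K) (x : Bool) : K :=
  (1 + outcomeSign x * f) / 2

/-- The derivative of `binaryProb f` along a path on which `f` has derivative `c`. -/
def binaryTangent (c : K) (x : Bool) : K :=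
  outcomeSign x * c / 2

theorem binaryProb_pos [LinearOrder K] [IsStrictOrderedRing K] {f : K} (hf : -1 < f ∧ f < 1)
    (x : Bool) : 0 < binaryProb f x := by
  refine div_pos ?_ two_pos
  cases x <;> simp only [outcomeSign, if_true, Bool.false_eq_true, if_false] <;> linarith

theorem sum_binaryProb [NeZero (2 : K)] (f : K) : ∑ x, binaryProb f x = 1 := by
  simp only [Fintype.sum_bool, binaryProb, outcomeSign, if_true, Bool.false_eq_true, if_false]
  field_simp
  ring

theorem sum_binaryTangent (c : K) : ∑ x, binaryTangent c x = 0 := by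
  simp only [Fintype.sum_bool, binaryTangent, outcomeSign, if_true, Bool.false_eq_true, if_false]
  ring

theorem binaryProb_eq_add_smul (f g : K) :
    binaryProb g = binaryProb f + (g - f) • binaryTangent 1 := by
  ext x
  simp only [binaryProb, binaryTangent, Pi.add_apply, Pi.smul_apply, smul_eq_mul]
  ring

theorem binaryTangent_eq_smul (c : K) : binaryTangent c = c • binaryTangent 1 := by
  ext x
  simp only [binaryTangent, Pi.smul_apply, smul_eq_mul]
  ring

theorem informationForm_binaryTangent_one [NeZero (2 : K)] {f : K} (hf : f ^ 2 ≠ 1) :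
    informationForm (binaryProb f) (binaryTangent 1) (binaryTangent 1) = (1 - f ^ 2)⁻¹ := by
  have hfactor : 1 - f ^ 2 = (1 + f) * (1 - f) := by ring
  obtain ⟨hplus, hminus⟩ : 1 + f ≠ 0 ∧ 1 - f ≠ 0 :=
    mul_ne_zero_iff.1 (hfactor ▸ sub_ne_zero.2 hf.symm)
  simp only [informationForm_apply, Fintype.sum_bool, binaryProb, binaryTangent, outcomeSign,
    if_true, Bool.false_eq_true, if_false, one_mul, neg_one_mul, ← sub_eq_add_neg, hfactor]
  field_simp
  ring

end BinaryModel

/-- **m-repetition information matrix for the two-outcome model.**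
On the binary outcome set `{+1,−1}` (encoded by `Bool` via `sgn`), with
`p_j(x) = (1 + x f_j)/2` and `G_j(x⃗) = ∑ r, (x_r c_j/2) ∏_{s ≠ r} p_j(x_s)`, for all `j, k`:
`∑_{x⃗} G_j G_k / ∏ r p_i(x_r) = m (1+Δ)^{m−2} (1+mΔ) · c_j c_k/(1−f_i²)` with
`Δ = (f_j−f_i)(f_k−f_i)/(1−f_i²)`; moreover `1+Δ > 0`, and the single-shot information
equals `c_j c_k/(1−f_i²)`. -/
theorem binary_model_information_matrix
    {n : ℕ}
    (f c : Fin n → ℝ)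
    (hf : ∀ j, -1 < f j ∧ f j < 1)
    (i : Fin n)
    (m : ℕ) (hm : 2 ≤ m)
    (sgn : Bool → ℝ) (hsgn : sgn = fun b => if b then 1 else -1) :
    ∀ j k : Fin n,
      0 < 1 + (f j - f i) * (f k - f i) / (1 - f i ^ 2) ∧
      (∑ xs : Fin m → Bool,
          (∑ r : Fin m, sgn (xs r) * c j / 2 *
              ∏ s ∈ Finset.univ.erase r, (1 + sgn (xs s) * f j) / 2) *
            (∑ r : Fin m, sgn (xs r) * c k / 2 *
              ∏ s ∈ Finset.univ.erase r, (1 + sgn (xs s) * f k) / 2) /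
            ∏ r : Fin m, (1 + sgn (xs r) * f i) / 2
        = (m : ℝ) * (1 + (f j - f i) * (f k - f i) / (1 - f i ^ 2)) ^ (m - 2) *
            (1 + (m : ℝ) * ((f j - f i) * (f k - f i) / (1 - f i ^ 2))) *
            (c j * c k / (1 - f i ^ 2))) ∧
      (∑ x : Bool,
          (sgn x * c j / 2) * (sgn x * c k / 2) / ((1 + sgn x * f i) / 2)
        = c j * c k / (1 - f i ^ 2)) := by
  intro j k
  obtain rfl : sgn = outcomeSign := hsgn
  have hfi : f i ^ 2 ≠ 1 := ((sq_lt_one_iff_abs_lt_one (f i)).2 (abs_lt.2 (hf i))).ne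
  simp only [div_eq_mul_inv _ (1 - f i ^ 2), ← informationForm_binaryTangent_one hfi]
  exact binary_model_information_matrix_general f c (fun j => binaryProb (f j))
    (fun j => binaryTangent (c j)) (binaryTangent 1) i (fun j => binaryProb_pos (hf j))
    (sum_binaryProb (f i)) (sum_binaryTangent 1) (fun j => binaryProb_eq_add_smul (f i) (f j))
    (fun j => binaryTangent_eq_smul (c j)) m hm j k
end

section
/- Let ρ be a positive-definite Hermitian d×d complex matrix, G a Hermitian d×d complex matrix, and L the unique Hermitian d×d matrix satisfying ρL + Lρ = 2G. Let E_1,…,E_N be positive semidefinite Hermitian d×d matrices with Σ_x E_x = I (a POVM). Then Σ_{x : E_x ≠ 0} (Tr[E_x G])² / Tr[E_x ρ] ≤ Tr[G L], where each trace Tr[E_x G] is real and Tr[E_x ρ] > 0 whenever E_x ≠ 0. -/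
open Finset Matrix
open scoped ComplexOrder

/-!
For positive semidefinite `E` and `ρ`, the form `⟪X, Y⟫ = Tr[E Y ρ Xᴴ]` is a semi-inner product on
matrices. The Lyapunov equation gives `Re Tr[E G] = Re ⟪1, L⟫`, so Cauchy–Schwarz bounds
`(Re Tr[E G])²` by `⟪1, 1⟫ ⟪L, L⟫ = Tr[E ρ] Tr[E L ρ L]`. Dividing by `Tr[E ρ]` and summing over the
measurement leaves `Tr[L ρ L] = Tr[G L]`.
-/

section

open scoped MatrixOrder

variable {𝕜 n : Type*} [RCLike 𝕜] [Fintype n] {A B E ρ G L : Matrix n n 𝕜}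

theorem im_trace_mul_eq_zero_of_isHermitian (hA : A.IsHermitian) (hB : B.IsHermitian) :
    RCLike.im (A * B).trace = 0 := by
  rw [← RCLike.conj_eq_iff_im, starRingEnd_apply, ← trace_conjTranspose, conjTranspose_mul,
    hA.eq, hB.eq, trace_mul_comm]

theorem trace_mul_nonneg_of_posSemidef (hA : A.PosSemidef) (hB : B.PosSemidef) :
    0 ≤ (A * B).trace := by
  classical
  obtain ⟨C, rfl⟩ := CStarAlgebra.nonneg_iff_eq_star_mul_self.mp hA.nonneg
  rw [star_eq_conjTranspose, Matrix.mul_assoc, trace_mul_comm]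
  exact (hB.mul_mul_conjTranspose_same C).trace_nonneg

theorem trace_mul_pos_of_posSemidef_of_posDef (hA : A.PosSemidef) (hA₀ : A ≠ 0)
    (hB : B.PosDef) : 0 < (A * B).trace := by
  classical
  refine (trace_mul_nonneg_of_posSemidef hA hB.posSemidef).lt_of_ne' fun htrace => hA₀ ?_
  obtain ⟨C, rfl⟩ := CStarAlgebra.nonneg_iff_eq_star_mul_self.mp hA.nonneg
  obtain ⟨D, rfl⟩ := CStarAlgebra.nonneg_iff_eq_star_mul_self.mp hB.posSemidef.nonneg
  simp only [star_eq_conjTranspose] at *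
  have hCD : C * Dᴴ = 0 := by
    rw [← trace_mul_conjTranspose_self_eq_zero_iff, ← htrace, conjTranspose_mul,
      conjTranspose_conjTranspose, Matrix.mul_assoc Cᴴ, trace_mul_comm Cᴴ]
    simp only [Matrix.mul_assoc]
  have hC : C = 0 := hB.isUnit.mul_left_eq_zero.mp <| by
    rw [← Matrix.mul_assoc, hCD, Matrix.zero_mul]
  rw [hC, Matrix.mul_zero]

theorem norm_trace_mul_mul_sq_le (hE : E.PosSemidef) (hρ : ρ.PosSemidef) (L : Matrix n n 𝕜) :
    ‖(E * (L * ρ)).trace‖ ^ 2 ≤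
      RCLike.re (E * ρ).trace * RCLike.re (E * (L * ρ * Lᴴ)).trace := by
  classical
  obtain ⟨C, rfl⟩ := CStarAlgebra.nonneg_iff_eq_star_mul_self.mp hE.nonneg
  let := ρ.toMatrixSeminormedAddCommGroup hρ
  let := ρ.toMatrixInnerProductSpace hρ
  have inner_eq (X Y : Matrix n n 𝕜) :
      inner 𝕜 (C * X) (C * Y) = (star C * C * (Y * ρ * Xᴴ)).trace := by
    rw [star_eq_conjTranspose, Matrix.mul_assoc Cᴴ, trace_mul_comm Cᴴ]
    change (C * Y * ρ * (C * X)ᴴ).trace = _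
    simp only [conjTranspose_mul, Matrix.mul_assoc]
  have cauchy_schwarz := inner_mul_inner_self_le (𝕜 := 𝕜) (C * 1) (C * L)
  rw [norm_inner_symm (C * L), ← sq, inner_eq, inner_eq, inner_eq] at cauchy_schwarz
  simpa only [conjTranspose_one, Matrix.one_mul, Matrix.mul_one] using cauchy_schwarz

theorem re_trace_mul_eq_of_lyapunov (hE : E.IsHermitian) (hρ : ρ.IsHermitian)
    (hL : L.IsHermitian) (hLyap : ρ * L + L * ρ = (2 : 𝕜) • G) :
    RCLike.re (E * G).trace = RCLike.re (E * (L * ρ)).trace := by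
  have hadjoint : RCLike.re (E * (ρ * L)).trace = RCLike.re (E * (L * ρ)).trace := by
    rw [← RCLike.conj_re, starRingEnd_apply, ← trace_conjTranspose, conjTranspose_mul,
      conjTranspose_mul, hE.eq, hρ.eq, hL.eq, trace_mul_comm]
  have htwice := congrArg (fun M => RCLike.re (E * M).trace) hLyap
  simp only [Matrix.mul_add, trace_add, map_add, mul_smul_comm, trace_smul, smul_eq_mul,
    ← RCLike.ofReal_ofNat (K := 𝕜) 2, RCLike.re_ofReal_mul, hadjoint] at htwice
  linarith

theorem trace_mul_eq_of_lyapunov (hLyap : ρ * L + L * ρ = (2 : 𝕜) • G) :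
    (G * L).trace = (L * ρ * L).trace := by
  have htwice := congrArg (fun M => (M * L).trace) hLyap
  simp only [Matrix.add_mul, trace_add, smul_mul_assoc, trace_smul, smul_eq_mul,
    trace_mul_comm (ρ * L) L, ← Matrix.mul_assoc] at htwice
  linear_combination (-1 / 2 : 𝕜) * htwice

theorem sq_re_trace_mul_div_le_of_lyapunov (hE : E.PosSemidef) (hρ : ρ.PosSemidef)
    (hL : L.IsHermitian) (hLyap : ρ * L + L * ρ = (2 : 𝕜) • G)
    (hpos : 0 < RCLike.re (E * ρ).trace) :
    RCLike.re (E * G).trace ^ 2 / RCLike.re (E * ρ).trace ≤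
      RCLike.re (E * (L * ρ * L)).trace := by
  rw [div_le_iff₀' hpos]
  calc RCLike.re (E * G).trace ^ 2
      = RCLike.re (E * (L * ρ)).trace ^ 2 := by
        rw [re_trace_mul_eq_of_lyapunov hE.isHermitian hρ.isHermitian hL hLyap]
    _ ≤ ‖(E * (L * ρ)).trace‖ ^ 2 :=
        sq_le_sq.mpr ((RCLike.abs_re_le_norm _).trans (le_abs_self _))
    _ ≤ RCLike.re (E * ρ).trace * RCLike.re (E * (L * ρ * L)).trace := by
        simpa only [hL.eq] using norm_trace_mul_mul_sq_le hE hρ L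

theorem quantum_score_bound_general [DecidableEq n] {ι : Type*} {s : Finset ι}
    {E : ι → Matrix n n 𝕜} (hρ : ρ.PosSemidef) (hL : L.IsHermitian)
    (hLyap : ρ * L + L * ρ = (2 : 𝕜) • G) (hE : ∀ x ∈ s, (E x).PosSemidef)
    (hsum : (1 - ∑ x ∈ s, E x).PosSemidef)
    (hpos : ∀ x ∈ s, 0 < RCLike.re (E x * ρ).trace) :
    ∑ x ∈ s, RCLike.re (E x * G).trace ^ 2 / RCLike.re (E x * ρ).trace ≤
      RCLike.re (G * L).trace := by
  have hLρL : (L * ρ * L).PosSemidef := by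
    simpa only [hL.eq] using hρ.mul_mul_conjTranspose_same L
  have htrace_deficit : 0 ≤ ((1 - ∑ x ∈ s, E x) * (L * ρ * L)).trace :=
    trace_mul_nonneg_of_posSemidef hsum hLρL
  calc ∑ x ∈ s, RCLike.re (E x * G).trace ^ 2 / RCLike.re (E x * ρ).trace
      ≤ ∑ x ∈ s, RCLike.re (E x * (L * ρ * L)).trace :=
        sum_le_sum fun x hx =>
          sq_re_trace_mul_div_le_of_lyapunov (hE x hx) hρ hL hLyap (hpos x hx)
    _ = RCLike.re ((∑ x ∈ s, E x) * (L * ρ * L)).trace := by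
        rw [Finset.sum_mul, trace_sum, map_sum]
    _ ≤ RCLike.re (L * ρ * L).trace := by
        rw [Matrix.sub_mul, Matrix.one_mul, trace_sub, sub_nonneg] at htrace_deficit
        exact RCLike.re_monotone htrace_deficit
    _ = RCLike.re (G * L).trace := by rw [trace_mul_eq_of_lyapunov hLyap]

end

/-- **Measurement optimization step: classical score term bounded by the quantum one.**
Let `ρ` be positive definite Hermitian, `G` Hermitian, and `L` the Hermitian solution of the
Lyapunov equation `ρL + Lρ = 2G` (the generalized SLD).  For any POVM `E_1,…,E_N`
(positive semidefinite with `∑ x, E x = 1`), each `Tr[E_x G]` is real, `Tr[E_x ρ] > 0`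
whenever `E_x ≠ 0`, and `∑_{x : E_x ≠ 0} (Tr[E_x G])² / Tr[E_x ρ] ≤ Tr[G L]`. -/
theorem quantum_score_bound
    {d N : ℕ}
    (ρ G L : Matrix (Fin d) (Fin d) ℂ)
    (hρ : ρ.PosDef) (hG : G.IsHermitian) (hL : L.IsHermitian)
    (hLyap : ρ * L + L * ρ = (2 : ℂ) • G)
    (E : Fin N → Matrix (Fin d) (Fin d) ℂ)
    (hE : ∀ x, (E x).PosSemidef)
    (hsum : ∑ x, E x = 1)
    [DecidablePred fun x : Fin N => E x ≠ 0] :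
    (∀ x, ((E x * G).trace).im = 0) ∧
    (∀ x, E x ≠ 0 → 0 < ((E x * ρ).trace).re) ∧
    (∑ x ∈ Finset.univ.filter (fun x : Fin N => E x ≠ 0),
        (((E x * G).trace).re) ^ 2 / ((E x * ρ).trace).re
      ≤ ((G * L).trace).re) := by
  have hpos x (hx : E x ≠ 0) : 0 < (E x * ρ).trace.re :=
    (Complex.pos_iff.mp (trace_mul_pos_of_posSemidef_of_posDef (hE x) hx hρ)).1
  have hdeficit : (1 - ∑ x with E x ≠ 0, E x).PosSemidef := by
    rw [sum_filter_ne_zero, hsum, sub_self]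
    exact .zero
  exact ⟨fun x => im_trace_mul_eq_zero_of_isHermitian (hE x).isHermitian hG, hpos,
    quantum_score_bound_general hρ.posSemidef hL hLyap (fun x _ => hE x) hdeficit
      fun x hx => hpos x (mem_filter.mp hx).2⟩
end

section
/- Let 0 < d < 1 and θ_i, θ_j, θ_k ∈ ℝ. Define the 2×2 complex matrices ρ_i = (I + d·cos θ_i·σ_x + d·sin θ_i·σ_y)/2 and, for any angle θ, G_θ = (−d·sin θ·σ_x + d·cos θ·σ_y)/2, where σ_x = [[0,1],[1,0]] and σ_y = [[0,−i],[i,0]]. Let L be the unique Hermitian 2×2 matrix with ρ_i L + L ρ_i = 2·G_{θ_k}. Then Tr[G_{θ_j} · L] = d⁴·sin(θ_i−θ_j)·sin(θ_i−θ_k)/(1−d²) + d²·cos(θ_j−θ_k). -/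
open Matrix

/-!
Pairing the Lyapunov equation `ρ L + L ρ = σ·g` with `X` under the trace moves the anticommutator
from `L` to `X`: `Tr[(X ρ + ρ X) L] = Tr[X (σ·g)]`. By the Clifford relation
`(σ·a)(σ·b) + (σ·b)(σ·a) = 2 (a ⬝ b)`, the choices `X = 1` and `X = σ·r`, with `r` the Bloch vector
of `ρ`, give `(1 - r ⬝ r) Tr L = -2 (r ⬝ g)`, and the choice `X = σ·a` then gives `Tr[(σ·a) L]`.
Differentiation in `θ` turns an equatorial Bloch vector by a quarter turn, so in the qubit model all
the vectors are equatorial and their products are sines and cosines of angle differences.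
-/

theorem trace_anticommutator_mul {n R : Type*} [Fintype n] [NonUnitalCommSemiring R]
    (A B L : Matrix n n R) :
    ((A * B + B * A) * L).trace = (A * (B * L + L * B)).trace := by
  rw [add_mul, mul_add, trace_add, trace_add, mul_assoc, mul_assoc, trace_mul_comm B, mul_assoc]

/-- The matrix `a₀ σ_x + a₁ σ_y + a₂ σ_z` attached to a vector `a` by the Pauli matrices. Complex
coordinates are allowed, since the Clifford relation is bilinear. -/
def pauliVec (a : Fin 3 → ℂ) : Matrix (Fin 2) (Fin 2) ℂ :=
  a 0 • !![0, 1; 1, 0] + a 1 • !![0, -Complex.I; Complex.I, 0] + a 2 • !![1, 0; 0, -1]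

/-- The qubit matrix `(1 + σ·r) / 2` with Bloch vector `r`. It is a density matrix when `r` is real
with `r ⬝ᵥ r ≤ 1`, which is not built into the definition. -/
noncomputable def blochState (r : Fin 3 → ℂ) : Matrix (Fin 2) (Fin 2) ℂ :=
  ((1 : ℂ) / 2) • (1 + pauliVec r)

/-- The vector of length `d` and azimuth `θ` in the equatorial plane of the Bloch ball, the
Bloch vector of the noisy qubit model. Both parameters may be complex, as in `pauliVec`. -/
noncomputable def equatorialVec (d θ : ℂ) : Fin 3 → ℂ :=
  ![d * Complex.cos θ, d * Complex.sin θ, 0]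

section Pauli

variable (a b r : Fin 3 → ℂ)

theorem trace_pauliVec : (pauliVec a).trace = 0 := by
  simp [pauliVec, trace_fin_two]

theorem pauliVec_anticommutator :
    pauliVec a * pauliVec b + pauliVec b * pauliVec a = (2 * (a ⬝ᵥ b)) • 1 := by
  ext i j
  fin_cases i <;> fin_cases j <;> simp [pauliVec, dotProduct, Fin.sum_univ_three] <;>
    grind [Complex.I_sq]

theorem trace_pauliVec_mul_pauliVec : (pauliVec a * pauliVec b).trace = 2 * (a ⬝ᵥ b) := by
  have h := congrArg trace (pauliVec_anticommutator a b)
  rw [trace_add, trace_mul_comm (pauliVec b), trace_smul, trace_one, Fintype.card_fin,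
    smul_eq_mul] at h
  push_cast at h
  linear_combination h / 2

theorem pauliVec_blochState_anticommutator :
    pauliVec a * blochState r + blochState r * pauliVec a = pauliVec a + (a ⬝ᵥ r) • 1 := by
  calc
    _ = pauliVec a + ((1 : ℂ) / 2) • (pauliVec a * pauliVec r + pauliVec r * pauliVec a) := by
      simp only [blochState, mul_smul_comm, smul_mul_assoc, mul_add, add_mul, mul_one, one_mul]
      module
    _ = pauliVec a + (a ⬝ᵥ r) • 1 := by
      rw [pauliVec_anticommutator, smul_smul]
      ring_nf

end Pauli

section Lyapunov

variable {r g : Fin 3 → ℂ} {L : Matrix (Fin 2) (Fin 2) ℂ}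

theorem trace_add_trace_pauliVec_mul_of_lyapunov
    (hL : blochState r * L + L * blochState r = pauliVec g) :
    L.trace + (pauliVec r * L).trace = 0 := by
  have hpair := trace_anticommutator_mul 1 (blochState r) L
  rw [hL, one_mul, one_mul, mul_one, trace_pauliVec] at hpair
  have hone : blochState r + blochState r = 1 + pauliVec r := by
    rw [blochState]
    module
  rwa [hone, add_mul, one_mul, trace_add] at hpair

theorem trace_pauliVec_mul_add_of_lyapunov (a : Fin 3 → ℂ)
    (hL : blochState r * L + L * blochState r = pauliVec g) :
    (pauliVec a * L).trace + (a ⬝ᵥ r) * L.trace = 2 * (a ⬝ᵥ g) := by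
  have hpair := trace_anticommutator_mul (pauliVec a) (blochState r) L
  rwa [hL, pauliVec_blochState_anticommutator, trace_pauliVec_mul_pauliVec, add_mul,
    smul_mul_assoc, one_mul, trace_add, trace_smul, smul_eq_mul] at hpair

theorem one_sub_mul_trace_of_lyapunov
    (hL : blochState r * L + L * blochState r = pauliVec g) :
    (1 - r ⬝ᵥ r) * L.trace = -2 * (r ⬝ᵥ g) := by
  linear_combination trace_add_trace_pauliVec_mul_of_lyapunov hL -
    trace_pauliVec_mul_add_of_lyapunov r hL

theorem qubit_quantum_information_entry_general (a : Fin 3 → ℂ) (hr : r ⬝ᵥ r ≠ 1)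
    (hL : blochState r * L + L * blochState r = pauliVec g) :
    ((((1 : ℂ) / 2) • pauliVec a) * L).trace =
      (a ⬝ᵥ r) * (r ⬝ᵥ g) / (1 - r ⬝ᵥ r) + a ⬝ᵥ g := by
  have hr' : 1 - r ⬝ᵥ r ≠ 0 := sub_ne_zero.mpr hr.symm
  have htrace : L.trace = -2 * (r ⬝ᵥ g) / (1 - r ⬝ᵥ r) :=
    eq_div_of_mul_eq hr' ((mul_comm _ _).trans (one_sub_mul_trace_of_lyapunov hL))
  have hpair := trace_pauliVec_mul_add_of_lyapunov a hL
  rw [htrace] at hpair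
  rw [smul_mul_assoc, trace_smul, smul_eq_mul]
  linear_combination hpair / 2

end Lyapunov

theorem equatorialVec_dotProduct (d e θ φ : ℂ) :
    equatorialVec d θ ⬝ᵥ equatorialVec e φ = d * e * Complex.cos (θ - φ) := by
  simp only [equatorialVec, dotProduct, Fin.sum_univ_three, cons_val, Complex.cos_sub]
  ring

theorem equatorialVec_dotProduct_add_pi_div_two (d e θ φ : ℂ) :
    equatorialVec d θ ⬝ᵥ equatorialVec e (φ + Real.pi / 2) = d * e * Complex.sin (θ - φ) := by
  rw [equatorialVec_dotProduct, ← sub_sub, Complex.cos_sub_pi_div_two]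

theorem equatorialVec_add_pi_div_two (d θ : ℂ) :
    equatorialVec d (θ + Real.pi / 2) = ![-(d * Complex.sin θ), d * Complex.cos θ, 0] := by
  rw [equatorialVec, Complex.cos_add_pi_div_two, Complex.sin_add_pi_div_two, mul_neg]

/-- **Quantum information matrix entry for the noisy qubit model.**
With `ρ_i = (I + d cos θ_i σ_x + d sin θ_i σ_y)/2` (positive definite since `0 < d < 1`),
`G_θ = (−d sin θ σ_x + d cos θ σ_y)/2`, and `L` the unique Hermitian solution of
`ρ_i L + L ρ_i = 2 G_{θ_k}`, one has
`Tr[G_{θ_j} L] = d⁴ sin(θ_i−θ_j) sin(θ_i−θ_k)/(1−d²) + d² cos(θ_j−θ_k)`. -/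
theorem qubit_quantum_information_entry
    (d θi θj θk : ℝ) (hd0 : 0 < d) (hd1 : d < 1)
    (σx σy : Matrix (Fin 2) (Fin 2) ℂ)
    (hσx : σx = !![0, 1; 1, 0])
    (hσy : σy = !![0, -Complex.I; Complex.I, 0])
    (ρi : Matrix (Fin 2) (Fin 2) ℂ)
    (hρi : ρi = ((1 : ℂ)/2) • ((1 : Matrix (Fin 2) (Fin 2) ℂ)
        + ((d * Real.cos θi : ℝ) : ℂ) • σx + ((d * Real.sin θi : ℝ) : ℂ) • σy))
    (G : ℝ → Matrix (Fin 2) (Fin 2) ℂ)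
    (hG : ∀ θ : ℝ, G θ = ((-(d * Real.sin θ) / 2 : ℝ) : ℂ) • σx
        + ((d * Real.cos θ / 2 : ℝ) : ℂ) • σy)
    (L : Matrix (Fin 2) (Fin 2) ℂ) (hL : L.IsHermitian)
    (hLyap : ρi * L + L * ρi = (2 : ℂ) • G θk) :
    (G θj * L).trace =
      ((d ^ 4 * Real.sin (θi - θj) * Real.sin (θi - θk) / (1 - d ^ 2)
          + d ^ 2 * Real.cos (θj - θk) : ℝ) : ℂ) := by
  have hGvec (θ : ℝ) : G θ = ((1 : ℂ) / 2) • pauliVec (equatorialVec d (θ + Real.pi / 2)) := by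
    simp only [hG, hσx, hσy, pauliVec, equatorialVec_add_pi_div_two, cons_val]
    push_cast
    module
  have hρvec : ρi = blochState (equatorialVec d θi) := by
    simp [hρi, hσx, hσy, blochState, pauliVec, equatorialVec, add_assoc]
  have hd : equatorialVec d θi ⬝ᵥ equatorialVec d θi ≠ 1 := by
    rw [equatorialVec_dotProduct, sub_self, Complex.cos_zero, mul_one]
    exact_mod_cast (by nlinarith : d * d ≠ 1)
  rw [hGvec, smul_smul, mul_one_div_cancel two_ne_zero, one_smul, hρvec] at hLyap
  rw [hGvec, qubit_quantum_information_entry_general _ hd hLyap,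
    dotProduct_comm _ (equatorialVec d θi), equatorialVec_dotProduct_add_pi_div_two,
    equatorialVec_dotProduct_add_pi_div_two, equatorialVec_dotProduct, equatorialVec_dotProduct,
    sub_self, Complex.cos_zero, add_sub_add_right_eq_sub]
  push_cast
  ring
end

section
/- Let X be a finite set, h : X → ℝ, and for each x ∈ X let θ ↦ p(x,θ) be a nonnegative continuously differentiable function on ℝ with Σ_{x∈X} ∫_ℝ p(x,θ) dθ = 1. Let A : ℝ × ℝ → ℝ be continuously differentiable with ∂_{θ'} A(θ,θ') = −∂_θ A(θ,θ') for all (θ,θ'). Assume: (i) for each x and θ, A(θ,θ')·p(x,θ') → 0 as θ' → ±∞; (ii) for each x and θ', A(θ,θ')·(h(x)−θ) → 0 as θ → ±∞; (iii) ∫_ℝ A(θ,θ') dθ = 1 for every θ'; and (iv) all functions appearing in the following iterated integrals are integrable, so that the integrals converge absolutely and the order of integration may be exchanged. Then ∫_ℝ Σ_{x∈X} (h(x)−θ) · (∫_ℝ A(θ,θ') · ∂_{θ'}p(x,θ') dθ') dθ = 1. -/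
open Finset MeasureTheory Filter Topology

/-!
Antisymmetry of the kernel lets an integration by parts in `θ'` trade `A ∂_{θ'} p` for
`(∂_θ A) p`, with no sign. After exchanging the integrals, a second integration by parts, now in
`θ`, moves `∂_θ` onto the error `h x - θ`, whose derivative is `-1`. What remains is `∫ A dθ = 1`
against `p`, that is, the total mass of `p`.
-/

section PartialDifferentiability

variable {𝕜 E F G : Type*} [NontriviallyNormedField 𝕜] [NormedAddCommGroup E] [NormedSpace 𝕜 E]
  [NormedAddCommGroup F] [NormedSpace 𝕜 F] [NormedAddCommGroup G] [NormedSpace 𝕜 G]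
  {f : E → F → G}

theorem differentiable_fst_of_differentiable_uncurry
    (hf : Differentiable 𝕜 fun q : E × F => f q.1 q.2) (y : F) :
    Differentiable 𝕜 fun x => f x y :=
  hf.comp (f := fun x => (x, y)) (by fun_prop)

theorem differentiable_snd_of_differentiable_uncurry
    (hf : Differentiable 𝕜 fun q : E × F => f q.1 q.2) (x : E) :
    Differentiable 𝕜 fun y => f x y :=
  hf.comp (f := fun y => (x, y)) (by fun_prop)

end PartialDifferentiability

section IntegrationByParts

variable {E : Type*} [NormedAddCommGroup E] [NormedSpace ℝ E] [CompleteSpace E]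

theorem integral_smul_deriv_eq_deriv_smul_of_hasDerivAt_neg {u u' : ℝ → ℝ} {v v' : ℝ → E}
    (hu : ∀ t, HasDerivAt u (-u' t) t) (hv : ∀ t, HasDerivAt v (v' t) t)
    (huv' : Integrable fun t => u t • v' t) (hu'v : Integrable fun t => u' t • v t)
    (h_bot : Tendsto (fun t => u t • v t) atBot (𝓝 0))
    (h_top : Tendsto (fun t => u t • v t) atTop (𝓝 0)) :
    ∫ t, u t • v' t = ∫ t, u' t • v t := by
  have hu'v_neg : Integrable fun t => -u' t • v t := by simpa only [neg_smul] using! hu'v.neg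
  calc ∫ t, u t • v' t = 0 - 0 - ∫ t, -u' t • v t :=
        integral_bilinear_hasDerivAt_right_eq_sub (L := ContinuousLinearMap.lsmul ℝ ℝ)
          (fun t _ => hu t) (fun t _ => hv t) huv' hu'v_neg h_bot h_top
    _ = ∫ t, u' t • v t := by simp only [neg_smul, integral_neg, sub_zero, zero_sub, neg_neg]

theorem integral_const_sub_smul_deriv {a a' : ℝ → E} (c : ℝ)
    (ha : ∀ t, HasDerivAt a (a' t) t) (ha_int : Integrable a)
    (ha'_int : Integrable fun t => (c - t) • a' t)
    (h_bot : Tendsto (fun t => (c - t) • a t) atBot (𝓝 0))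
    (h_top : Tendsto (fun t => (c - t) • a t) atTop (𝓝 0)) :
    ∫ t, (c - t) • a' t = ∫ t, a t := by
  have hc (t : ℝ) : HasDerivAt (fun t => c - t) (-1) t := (hasDerivAt_id t).const_sub c
  simpa only [one_smul] using
    integral_smul_deriv_eq_deriv_smul_of_hasDerivAt_neg (u' := fun _ => 1) hc ha ha'_int
      (by simpa only [one_smul] using ha_int) h_bot h_top

end IntegrationByParts

section Fubini

variable {α β E : Type*} [MeasurableSpace α] [MeasurableSpace β] [NormedAddCommGroup E]
  [NormedSpace ℝ E] {μ : Measure α} {ν : Measure β} [SFinite ν]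
  {f : α → ℝ} {K : α → β → ℝ} {g : β → E}

theorem integrable_smul_integral_kernel_smul
    (hfKg : Integrable (fun q : α × β => f q.1 • K q.1 q.2 • g q.2) (μ.prod ν)) :
    Integrable (fun a => f a • ∫ b, K a b • g b ∂ν) μ := by
  simpa only [integral_smul] using hfKg.integral_prod_left

theorem integral_smul_integral_kernel_smul_swap [CompleteSpace E] [SFinite μ]
    (hfKg : Integrable (fun q : α × β => f q.1 • K q.1 q.2 • g q.2) (μ.prod ν)) :
    ∫ a, f a • ∫ b, K a b • g b ∂ν ∂μ = ∫ b, (∫ a, f a • K a b ∂μ) • g b ∂ν := by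
  calc ∫ a, f a • ∫ b, K a b • g b ∂ν ∂μ = ∫ a, ∫ b, f a • K a b • g b ∂ν ∂μ := by
        simp only [integral_smul]
    _ = ∫ b, ∫ a, f a • K a b • g b ∂μ ∂ν := integral_integral_swap hfKg
    _ = ∫ b, (∫ a, f a • K a b ∂μ) • g b ∂ν := by
        simp only [← smul_assoc, integral_smul_const]

end Fubini

theorem bayesian_unit_correlation_general
    {X E : Type*} [Fintype X] [NormedAddCommGroup E] [NormedSpace ℝ E] [CompleteSpace E]
    (h : X → ℝ) {p p' : X → ℝ → E} {A A' : ℝ → ℝ → ℝ}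
    (hp : ∀ x θ, HasDerivAt (p x) (p' x θ) θ)
    (hA_fst : ∀ θ θ', HasDerivAt (fun t => A t θ') (A' θ θ') θ)
    (hA_snd : ∀ θ θ', HasDerivAt (fun t => A θ t) (-A' θ θ') θ')
    (hdecay_density : ∀ x θ, Tendsto (fun θ' => A θ θ' • p x θ') atTop (𝓝 0) ∧
      Tendsto (fun θ' => A θ θ' • p x θ') atBot (𝓝 0))
    (hdecay_error : ∀ x θ', Tendsto (fun θ => A θ θ' * (h x - θ)) atTop (𝓝 0) ∧
      Tendsto (fun θ => A θ θ' * (h x - θ)) atBot (𝓝 0))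
    (hA_norm : ∀ θ', ∫ θ, A θ θ' = 1)
    (hAp'_int : ∀ x θ, Integrable fun θ' => A θ θ' • p' x θ')
    (hA'p_int : ∀ x θ, Integrable fun θ' => A' θ θ' • p x θ')
    (hA'_int : ∀ x θ', Integrable fun θ => (h x - θ) • A' θ θ')
    (hprod_int : ∀ x, Integrable fun q : ℝ × ℝ => (h x - q.1) • A' q.1 q.2 • p x q.2) :
    ∫ θ, ∑ x, (h x - θ) • ∫ θ', A θ θ' • p' x θ' = ∑ x, ∫ θ, p x θ := by
  have score_eq (x : X) (θ : ℝ) : ∫ θ', A θ θ' • p' x θ' = ∫ θ', A' θ θ' • p x θ' :=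
    integral_smul_deriv_eq_deriv_smul_of_hasDerivAt_neg (hA_snd θ) (hp x) (hAp'_int x θ)
      (hA'p_int x θ) (hdecay_density x θ).2 (hdecay_density x θ).1
  have hA_int (θ' : ℝ) : Integrable fun θ => A θ θ' :=
    .of_integral_ne_zero (by rw [hA_norm]; exact one_ne_zero)
  have error_eq (x : X) (θ' : ℝ) : ∫ θ, (h x - θ) • A' θ θ' = 1 :=
    (integral_const_sub_smul_deriv (h x) (hA_fst · θ') (hA_int θ') (hA'_int x θ')
      (by simpa only [smul_eq_mul, mul_comm] using (hdecay_error x θ').2)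
      (by simpa only [smul_eq_mul, mul_comm] using (hdecay_error x θ').1)).trans (hA_norm θ')
  simp only [score_eq]
  rw [integral_finsetSum _ fun x _ => integrable_smul_integral_kernel_smul (hprod_int x)]
  refine sum_congr rfl fun x _ => ?_
  calc ∫ θ, (h x - θ) • ∫ θ', A' θ θ' • p x θ'
      = ∫ θ', (∫ θ, (h x - θ) • A' θ θ') • p x θ' :=
        integral_smul_integral_kernel_smul_swap (hprod_int x)
    _ = ∫ θ', p x θ' := by simp only [error_eq, one_smul]

/-- **Bayesian unit-correlation identity.**
For a joint density `p(x,θ)` of a finite outcome `x` and a continuous parameter `θ`, and a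
Bayesian hierarchy kernel `A(θ,θ')` with `∂_{θ'}A = −∂_θ A`, decaying against `p` and against
the estimator error, and normalized by `∫ A(θ,θ') dθ = 1`, the correlation of the estimator
error with the Bayesian global score equals one:
`∫ Σ_x (h(x)−θ) (∫ A(θ,θ') ∂_{θ'}p(x,θ') dθ') dθ = 1`. -/
theorem bayesian_unit_correlation
    {X : Type*} [Fintype X]
    (h : X → ℝ) (p : X → ℝ → ℝ)
    (hp_nonneg : ∀ x θ, 0 ≤ p x θ)
    (hp_smooth : ∀ x, ContDiff ℝ 1 (p x))
    (hp_int : ∀ x, Integrable (p x))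
    (hp_norm : ∑ x : X, ∫ θ : ℝ, p x θ = 1)
    (A : ℝ → ℝ → ℝ)
    (hA_smooth : ContDiff ℝ 1 (fun q : ℝ × ℝ => A q.1 q.2))
    (hA_anti : ∀ θ θ', deriv (fun t => A θ t) θ' = - deriv (fun t => A t θ') θ)
    -- (i) decay of the kernel against the density
    (hdecay₁ : ∀ x θ, Tendsto (fun θ' => A θ θ' * p x θ') atTop (𝓝 0) ∧
        Tendsto (fun θ' => A θ θ' * p x θ') atBot (𝓝 0))
    -- (ii) decay of the kernel against the estimator error
    (hdecay₂ : ∀ x θ', Tendsto (fun θ => A θ θ' * (h x - θ)) atTop (𝓝 0) ∧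
        Tendsto (fun θ => A θ θ' * (h x - θ)) atBot (𝓝 0))
    -- (iii) normalization of the kernel
    (hA_norm : ∀ θ', ∫ θ : ℝ, A θ θ' = 1)
    -- (iv) absolute convergence of all iterated integrals involved
    (hint₁ : ∀ x θ, Integrable (fun θ' => A θ θ' * deriv (p x) θ'))
    (hint₂ : ∀ x θ, Integrable (fun θ' => deriv (fun t => A t θ') θ * p x θ'))
    (hint₃ : ∀ x, Integrable (fun q : ℝ × ℝ => (h x - q.1) * (A q.1 q.2 * deriv (p x) q.2)))
    (hint₄ : ∀ x, Integrable (fun q : ℝ × ℝ =>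
        (h x - q.1) * (deriv (fun t => A t q.2) q.1 * p x q.2)))
    (hint₅ : ∀ x, Integrable (fun θ => (h x - θ) * ∫ θ' : ℝ, A θ θ' * deriv (p x) θ'))
    (hint₆ : ∀ x θ', Integrable (fun θ => (h x - θ) * deriv (fun t => A t θ') θ))
    (hint₇ : ∀ θ' : ℝ, Integrable (fun θ => A θ θ')) :
    ∫ θ : ℝ, ∑ x : X, (h x - θ) * ∫ θ' : ℝ, A θ θ' * deriv (p x) θ' = 1 := by
  have hA : Differentiable ℝ fun q : ℝ × ℝ => A q.1 q.2 := hA_smooth.differentiable one_ne_zero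
  exact (bayesian_unit_correlation_general h
    (fun x θ => ((hp_smooth x).differentiable one_ne_zero θ).hasDerivAt)
    (fun θ θ' => (differentiable_fst_of_differentiable_uncurry hA θ' θ).hasDerivAt)
    (fun θ θ' => hA_anti θ θ' ▸ (differentiable_snd_of_differentiable_uncurry hA θ θ').hasDerivAt)
    hdecay₁ hdecay₂ hA_norm hint₁ hint₂ hint₆ hint₄).trans hp_norm
end

section
/- Under the hypotheses of the Bayesian unit-correlation identity, assume additionally that p(x,θ) > 0 for all x ∈ X and θ ∈ ℝ, and define the Bayesian mean-square error BMSE = ∫_ℝ Σ_{x∈X} p(x,θ)·(h(x)−θ)² dθ and the information functional I = ∫_ℝ Σ_{x∈X} (∫_ℝ A(θ,θ')·∂_{θ'}p(x,θ') dθ')² / p(x,θ) dθ, assuming both integrals converge. Then BMSE · I ≥ 1; in particular, if I > 0 then BMSE ≥ 1/I. -/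
open Finset MeasureTheory Filter Topology

/-!
Integrating by parts in `θ'` moves the derivative from `p x` onto the kernel, and
`∂_{θ'} A = -∂_θ A` turns it into a derivative in `θ`. After Fubini, a second integration by parts,
now against `h x - θ`, leaves `∫ A(θ, θ') dθ = 1`, so the error `h x - θ` has correlation exactly
one with the smoothed derivative of `p x`. Splitting the product of the two as
`(√p · error) · (smoothed derivative / √p)`, Cauchy–Schwarz gives the bound.
-/

section Integration

variable {α β : Type*} [MeasurableSpace α] [MeasurableSpace β]

lemma sq_integral_mul_le_of_weight {μ : Measure α} {w f g : α → ℝ} (hw : ∀ᵐ a ∂μ, 0 < w a)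
    (hf : Integrable (fun a => w a * f a ^ 2) μ) (hg : Integrable (fun a => g a ^ 2 / w a) μ)
    (hfg : Integrable (fun a => f a * g a) μ) :
    (∫ a, f a * g a ∂μ) ^ 2 ≤ (∫ a, w a * f a ^ 2 ∂μ) * ∫ a, g a ^ 2 / w a ∂μ := by
  have quadratic_nonneg (t : ℝ) : 0 ≤ (∫ a, w a * f a ^ 2 ∂μ) * (t * t)
      + (-2 * ∫ a, f a * g a ∂μ) * t + ∫ a, g a ^ 2 / w a ∂μ :=
    calc 0 ≤ ∫ a, (t * w a * f a - g a) ^ 2 / w a ∂μ :=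
          integral_nonneg_of_ae (by filter_upwards [hw] with a ha using by positivity)
      _ = ∫ a, (w a * f a ^ 2 * (t * t) + f a * g a * (-2 * t) + g a ^ 2 / w a) ∂μ := by
          refine integral_congr_ae ?_
          filter_upwards [hw] with a ha
          field_simp
          ring
      _ = _ := by
          rw [integral_add (by fun_prop) hg, integral_add (hf.mul_const _) (hfg.mul_const _),
            integral_mul_const, integral_mul_const]
          ring
  have discrim_nonpos := discrim_le_zero quadratic_nonneg
  rw [discrim] at discrim_nonpos
  linarith

lemma integrable_count_prod_iff {E : Type*} [NormedAddCommGroup E] [Finite α]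
    [MeasurableSingletonClass α] {ν : Measure β} [SFinite ν] {f : α × β → E} :
    Integrable f (Measure.count.prod ν) ↔ ∀ a, Integrable (fun b => f (a, b)) ν := by
  cases nonempty_fintype α
  have count_prod : (Measure.count : Measure α).prod ν = ∑ a, ν.map (Prod.mk a) := by
    rw [Measure.count, Measure.prod_sum_left, Measure.sum_fintype]
    simp only [Measure.dirac_prod]
  simp [count_prod, integrable_finsetSum_measure,
    (measurableEmbedding_prodMk_left _).integrable_map_iff, Function.comp_def]

lemma integrable_of_integrable_sum_of_nonneg {ι : Type*} [Fintype ι] {μ : Measure α}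
    {f : ι → α → ℝ} (hf_meas : ∀ i, AEStronglyMeasurable (f i) μ) (hf_nonneg : ∀ i a, 0 ≤ f i a)
    (hf_sum : Integrable (fun a => ∑ i, f i a) μ) (i : ι) : Integrable (f i) μ := by
  refine hf_sum.mono' (hf_meas i) (.of_forall fun a => ?_)
  rw [Real.norm_of_nonneg (hf_nonneg i a)]
  exact single_le_sum (fun j _ => hf_nonneg j a) (mem_univ i)

end Integration

section SmoothedDerivative

/-- The derivative of `f` smoothed by the kernel `A`, that is `θ ↦ ∫ A(θ, θ') f'(θ') dθ'`. It takes
the place of `f'` in the Van Trees information and is `f'` itself in the limit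
`A(θ, θ') → δ(θ - θ')`. -/
noncomputable def smoothedDeriv (A : ℝ → ℝ → ℝ) (f : ℝ → ℝ) (θ : ℝ) : ℝ :=
  ∫ θ', A θ θ' * deriv f θ'

variable {A : ℝ → ℝ → ℝ} {f : ℝ → ℝ}

lemma measurable_smoothedDeriv (hA : Measurable fun q : ℝ × ℝ => A q.1 q.2) :
    Measurable (smoothedDeriv A f) :=
  (hA.mul ((measurable_deriv f).comp measurable_snd)).stronglyMeasurable.integral_prod_right'
    |>.measurable

lemma smoothedDeriv_eq_integral_deriv_mul {θ : ℝ}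
    (hA : Differentiable ℝ (A θ)) (hf : Differentiable ℝ f)
    (hA_anti : ∀ θ', deriv (A θ) θ' = -deriv (fun t => A t θ') θ)
    (hAf' : Integrable fun θ' => A θ θ' * deriv f θ')
    (hA'f : Integrable fun θ' => deriv (fun t => A t θ') θ * f θ')
    (h_top : Tendsto (fun θ' => A θ θ' * f θ') atTop (𝓝 0))
    (h_bot : Tendsto (fun θ' => A θ θ' * f θ') atBot (𝓝 0)) :
    smoothedDeriv A f θ = ∫ θ', deriv (fun t => A t θ') θ * f θ' := by
  have hA'f_neg : Integrable (deriv (A θ) * f) :=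
    hA'f.neg.congr (.of_forall fun θ' => by simp [hA_anti])
  have by_parts := integral_mul_deriv_eq_deriv_mul (fun θ' _ => (hA θ').hasDerivAt)
    (fun θ' _ => (hf θ').hasDerivAt) hAf' hA'f_neg h_bot h_top
  simpa [smoothedDeriv, hA_anti, integral_neg] using by_parts

lemma integral_const_sub_mul_deriv {φ : ℝ → ℝ} {c : ℝ}
    (hφ : Differentiable ℝ φ) (hφ_int : Integrable φ)
    (hφ'_int : Integrable fun θ => (c - θ) * deriv φ θ)
    (h_top : Tendsto (fun θ => φ θ * (c - θ)) atTop (𝓝 0))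
    (h_bot : Tendsto (fun θ => φ θ * (c - θ)) atBot (𝓝 0)) :
    ∫ θ, (c - θ) * deriv φ θ = ∫ θ, φ θ := by
  simp only [mul_comm (φ _)] at h_top h_bot
  have hφ_neg : Integrable ((fun _ => (-1 : ℝ)) * φ) :=
    hφ_int.neg.congr (.of_forall fun θ => by simp)
  have by_parts := integral_mul_deriv_eq_deriv_mul
    (fun θ _ => (hasDerivAt_id θ).const_sub c) (fun θ _ => (hφ θ).hasDerivAt)
    hφ'_int hφ_neg h_bot h_top
  simpa [integral_neg] using by_parts

lemma integral_const_sub_mul_smoothedDeriv {c : ℝ}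
    (hA_fst : ∀ θ', Differentiable ℝ fun θ => A θ θ') (hA_snd : ∀ θ, Differentiable ℝ (A θ))
    (hA_anti : ∀ θ θ', deriv (A θ) θ' = -deriv (fun t => A t θ') θ)
    (hA_norm : ∀ θ', ∫ θ, A θ θ' = 1)
    (hA_decay : ∀ θ', Tendsto (fun θ => A θ θ' * (c - θ)) atTop (𝓝 0) ∧
      Tendsto (fun θ => A θ θ' * (c - θ)) atBot (𝓝 0))
    (hA'_int : ∀ θ', Integrable fun θ => (c - θ) * deriv (fun t => A t θ') θ)
    (hf : Differentiable ℝ f)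
    (hAf_decay : ∀ θ, Tendsto (fun θ' => A θ θ' * f θ') atTop (𝓝 0) ∧
      Tendsto (fun θ' => A θ θ' * f θ') atBot (𝓝 0))
    (hAf'_int : ∀ θ, Integrable fun θ' => A θ θ' * deriv f θ')
    (hA'f_int : ∀ θ, Integrable fun θ' => deriv (fun t => A t θ') θ * f θ')
    (h_joint : Integrable fun q : ℝ × ℝ => (c - q.1) * (deriv (fun t => A t q.2) q.1 * f q.2)) :
    ∫ θ, (c - θ) * smoothedDeriv A f θ = ∫ θ, f θ := by
  have inner_eq_one (θ' : ℝ) : ∫ θ, (c - θ) * deriv (fun t => A t θ') θ = 1 := by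
    have hA_int : Integrable fun θ => A θ θ' := .of_integral_ne_zero (by simp [hA_norm])
    rw [integral_const_sub_mul_deriv (hA_fst θ') hA_int (hA'_int θ') (hA_decay θ').1
      (hA_decay θ').2, hA_norm]
  calc ∫ θ, (c - θ) * smoothedDeriv A f θ
      = ∫ θ, ∫ θ', (c - θ) * (deriv (fun t => A t θ') θ * f θ') := by
        congr! with θ
        rw [smoothedDeriv_eq_integral_deriv_mul (hA_snd θ) hf (hA_anti θ) (hAf'_int θ)
          (hA'f_int θ) (hAf_decay θ).1 (hAf_decay θ).2, integral_const_mul]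
    _ = ∫ θ', ∫ θ, (c - θ) * (deriv (fun t => A t θ') θ * f θ') := integral_integral_swap h_joint
    _ = ∫ θ', f θ' := by
        simp only [← mul_assoc, integral_mul_const, inner_eq_one, one_mul]

end SmoothedDerivative

section VanTrees

variable {X : Type*} [MeasurableSpace X]

/-- The Bayesian mean-square error of the estimator `h` for the joint density `p` with respect to
`μ ⊗ dθ`; finite sums over the sample space are the case of the counting measure. -/
noncomputable def bayesMSE (μ : Measure X) (h : X → ℝ) (p : X → ℝ → ℝ) : ℝ :=
  ∫ θ, ∫ x, p x θ * (h x - θ) ^ 2 ∂μ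

/-- The information functional of the joint density `p` with respect to `μ ⊗ dθ`: the Van Trees
information with the derivative of `p x` smoothed by `A`. -/
noncomputable def smoothedInformation (μ : Measure X) (A : ℝ → ℝ → ℝ) (p : X → ℝ → ℝ) : ℝ :=
  ∫ θ, ∫ x, smoothedDeriv A (p x) θ ^ 2 / p x θ ∂μ

theorem generalized_van_trees_bound_general
    (μ : Measure X) [SFinite μ] (h : X → ℝ) (p : X → ℝ → ℝ)
    (hp_pos : ∀ᵐ z : X × ℝ ∂μ.prod volume, 0 < p z.1 z.2)
    (hp_diff : ∀ x, Differentiable ℝ (p x))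
    (hp_norm : ∫ x, (∫ θ, p x θ) ∂μ = 1)
    (A : ℝ → ℝ → ℝ)
    (hA_fst : ∀ θ', Differentiable ℝ fun θ => A θ θ') (hA_snd : ∀ θ, Differentiable ℝ (A θ))
    (hA_anti : ∀ θ θ', deriv (A θ) θ' = -deriv (fun t => A t θ') θ)
    (hA_norm : ∀ θ', ∫ θ, A θ θ' = 1)
    (hA_decay : ∀ x θ', Tendsto (fun θ => A θ θ' * (h x - θ)) atTop (𝓝 0) ∧
      Tendsto (fun θ => A θ θ' * (h x - θ)) atBot (𝓝 0))
    (hA'_int : ∀ x θ', Integrable fun θ => (h x - θ) * deriv (fun t => A t θ') θ)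
    (hAp_decay : ∀ x θ, Tendsto (fun θ' => A θ θ' * p x θ') atTop (𝓝 0) ∧
      Tendsto (fun θ' => A θ θ' * p x θ') atBot (𝓝 0))
    (hAp'_int : ∀ x θ, Integrable fun θ' => A θ θ' * deriv (p x) θ')
    (hA'p_int : ∀ x θ, Integrable fun θ' => deriv (fun t => A t θ') θ * p x θ')
    (h_joint : ∀ x, Integrable fun q : ℝ × ℝ =>
      (h x - q.1) * (deriv (fun t => A t q.2) q.1 * p x q.2))
    (h_corr : Integrable (fun z : X × ℝ => (h z.1 - z.2) * smoothedDeriv A (p z.1) z.2)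
      (μ.prod volume))
    (h_mse : Integrable (fun z : X × ℝ => p z.1 z.2 * (h z.1 - z.2) ^ 2) (μ.prod volume))
    (h_info : Integrable (fun z : X × ℝ => smoothedDeriv A (p z.1) z.2 ^ 2 / p z.1 z.2)
      (μ.prod volume)) :
    1 ≤ bayesMSE μ h p * smoothedInformation μ A p ∧
      (0 < smoothedInformation μ A p → 1 / smoothedInformation μ A p ≤ bayesMSE μ h p) := by
  have unit_correlation :
      ∫ z : X × ℝ, (h z.1 - z.2) * smoothedDeriv A (p z.1) z.2 ∂μ.prod volume = 1 := by
    rw [integral_prod _ h_corr, ← hp_norm]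
    refine integral_congr_ae (.of_forall fun x => ?_)
    exact integral_const_sub_mul_smoothedDeriv hA_fst hA_snd hA_anti hA_norm (hA_decay x)
      (hA'_int x) (hp_diff x) (hAp_decay x) (hAp'_int x) (hA'p_int x) (h_joint x)
  have bound : 1 ≤ bayesMSE μ h p * smoothedInformation μ A p := by
    have cauchy_schwarz := sq_integral_mul_le_of_weight hp_pos h_mse h_info h_corr
    rwa [unit_correlation, one_pow, integral_prod_symm _ h_mse, integral_prod_symm _ h_info]
      at cauchy_schwarz
  exact ⟨bound, fun h_pos => (div_le_iff₀ h_pos).2 bound⟩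

end VanTrees

/-- **Generalized Van Trees bound.**
Under the hypotheses of the Bayesian unit-correlation identity, assuming additionally
`p(x,θ) > 0`, the Bayesian mean-square error `BMSE = ∫ Σ_x p(x,θ)(h(x)−θ)² dθ` and the
information functional `I = ∫ Σ_x (∫ A(θ,θ') ∂_{θ'}p(x,θ') dθ')²/p(x,θ) dθ` satisfy
`BMSE · I ≥ 1`; in particular, if `I > 0` then `BMSE ≥ 1/I`. -/
theorem generalized_van_trees_bound
    {X : Type*} [Fintype X]
    (h : X → ℝ) (p : X → ℝ → ℝ)
    (hp_pos : ∀ x θ, 0 < p x θ)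
    (hp_smooth : ∀ x, ContDiff ℝ 1 (p x))
    (hp_int : ∀ x, Integrable (p x))
    (hp_norm : ∑ x : X, ∫ θ : ℝ, p x θ = 1)
    (A : ℝ → ℝ → ℝ)
    (hA_smooth : ContDiff ℝ 1 (fun q : ℝ × ℝ => A q.1 q.2))
    (hA_anti : ∀ θ θ', deriv (fun t => A θ t) θ' = - deriv (fun t => A t θ') θ)
    (hdecay₁ : ∀ x θ, Tendsto (fun θ' => A θ θ' * p x θ') atTop (𝓝 0) ∧
        Tendsto (fun θ' => A θ θ' * p x θ') atBot (𝓝 0))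
    (hdecay₂ : ∀ x θ', Tendsto (fun θ => A θ θ' * (h x - θ)) atTop (𝓝 0) ∧
        Tendsto (fun θ => A θ θ' * (h x - θ)) atBot (𝓝 0))
    (hA_norm : ∀ θ', ∫ θ : ℝ, A θ θ' = 1)
    (hint₁ : ∀ x θ, Integrable (fun θ' => A θ θ' * deriv (p x) θ'))
    (hint₂ : ∀ x θ, Integrable (fun θ' => deriv (fun t => A t θ') θ * p x θ'))
    (hint₃ : ∀ x, Integrable (fun q : ℝ × ℝ => (h x - q.1) * (A q.1 q.2 * deriv (p x) q.2)))
    (hint₄ : ∀ x, Integrable (fun q : ℝ × ℝ =>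
        (h x - q.1) * (deriv (fun t => A t q.2) q.1 * p x q.2)))
    (hint₅ : ∀ x, Integrable (fun θ => (h x - θ) * ∫ θ' : ℝ, A θ θ' * deriv (p x) θ'))
    (hint₆ : ∀ x θ', Integrable (fun θ => (h x - θ) * deriv (fun t => A t θ') θ))
    (hint₇ : ∀ θ' : ℝ, Integrable (fun θ => A θ θ'))
    -- convergence of the Bayesian mean-square error and of the information functional
    (BMSE : ℝ)
    (hBMSE : BMSE = ∫ θ : ℝ, ∑ x : X, p x θ * (h x - θ) ^ 2)
    (hBMSE_int : Integrable (fun θ : ℝ => ∑ x : X, p x θ * (h x - θ) ^ 2))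
    (I : ℝ)
    (hI : I = ∫ θ : ℝ, ∑ x : X,
        (∫ θ' : ℝ, A θ θ' * deriv (p x) θ') ^ 2 / p x θ)
    (hI_int : Integrable (fun θ : ℝ => ∑ x : X,
        (∫ θ' : ℝ, A θ θ' * deriv (p x) θ') ^ 2 / p x θ)) :
    1 ≤ BMSE * I ∧ (0 < I → 1 / I ≤ BMSE) := by
  let : MeasurableSpace X := ⊤
  have hA_diff := hA_smooth.differentiable one_ne_zero
  have hp_meas (x : X) : Measurable (p x) := (hp_smooth x).continuous.measurable
  have hD_meas (x : X) : Measurable (smoothedDeriv A (p x)) :=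
    measurable_smoothedDeriv hA_smooth.continuous.measurable
  have h_mse := integrable_of_integrable_sum_of_nonneg
    (fun x => Measurable.aestronglyMeasurable (by fun_prop))
    (fun x θ => by have := hp_pos x θ; positivity) hBMSE_int
  have h_info := integrable_of_integrable_sum_of_nonneg
    (f := fun x θ => smoothedDeriv A (p x) θ ^ 2 / p x θ)
    (fun x => Measurable.aestronglyMeasurable (by fun_prop))
    (fun x θ => by have := hp_pos x θ; positivity) hI_int
  have h_bound := generalized_van_trees_bound_general .count h p
    (.of_forall fun z => hp_pos z.1 z.2) (fun x => (hp_smooth x).differentiable one_ne_zero)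
    (by rwa [integral_count]) A (fun θ' => by fun_prop) (fun θ => by fun_prop) hA_anti hA_norm
    hdecay₂ hint₆ hdecay₁ hint₁ hint₂ hint₄ (integrable_count_prod_iff.2 hint₅)
    (integrable_count_prod_iff.2 h_mse) (integrable_count_prod_iff.2 h_info)
  simpa only [hBMSE, hI, bayesMSE, smoothedInformation, integral_count] using! h_bound
end
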